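/- Interior weak Harnack inequality. For every integer n ≥ 2, reals 0 < λ ≤ Λ, exponents q > n and p with n ≤ p ≤ q, and K > 0, there exist constants ε > 0, c > 0, C > 0 such that the following holds. Let b, f : B₂ → ℝ be continuous with b ≥ 0 and ‖b‖_{L^q(B₂)} ≤ K, and let u be a C² function on B₂ with u ≥ 0 such that 𝓜⁻(D²u(x)) − b(x)|Du(x)| ≤ f(x) for all x ∈ B₂. Then c·(∫_{B₁} u(x)^ε dx)^{1/ε} ≤ inf_{x ∈ B₁} u(x) + C·‖f⁺‖_{L^p(B₂)}. -/

import Mathlib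

open MeasureTheory
open scoped ENNReal

/-- The Pucci minimal extremal operator `𝓜⁻(M)` with ellipticity constants `lam ≤ Lam`:
the infimum of `tr(A*M)` over symmetric matrices `A` with `lam•I ≤ A ≤ Lam•I`. -/
noncomputable def pucciMinus (n : ℕ) (lam Lam : ℝ) (M : Matrix (Fin n) (Fin n) ℝ) : ℝ :=
  sInf { t : ℝ | ∃ A : Matrix (Fin n) (Fin n) ℝ, A.IsSymm ∧
    (A - lam • (1 : Matrix (Fin n) (Fin n) ℝ)).PosSemidef ∧
    (Lam • (1 : Matrix (Fin n) (Fin n) ℝ) - A).PosSemidef ∧ t = (A * M).trace }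

/-- The Pucci maximal extremal operator `𝓜⁺(M)`. -/
noncomputable def pucciPlus (n : ℕ) (lam Lam : ℝ) (M : Matrix (Fin n) (Fin n) ℝ) : ℝ :=
  sSup { t : ℝ | ∃ A : Matrix (Fin n) (Fin n) ℝ, A.IsSymm ∧
    (A - lam • (1 : Matrix (Fin n) (Fin n) ℝ)).PosSemidef ∧
    (Lam • (1 : Matrix (Fin n) (Fin n) ℝ) - A).PosSemidef ∧ t = (A * M).trace }

/-- The Hessian matrix `D²u(x)` of `u` at `x`. -/
noncomputable def hess (n : ℕ) (u : EuclideanSpace ℝ (Fin n) → ℝ)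
    (x : EuclideanSpace ℝ (Fin n)) : Matrix (Fin n) (Fin n) ℝ :=
  fun i j => fderiv ℝ (fun y => fderiv ℝ u y (EuclideanSpace.single j (1 : ℝ))) x
    (EuclideanSpace.single i (1 : ℝ))

/-- The euclidean norm `|Du(x)|` of the gradient of `u` at `x`. -/
noncomputable def gradNorm (n : ℕ) (u : EuclideanSpace ℝ (Fin n) → ℝ)
    (x : EuclideanSpace ℝ (Fin n)) : ℝ := ‖fderiv ℝ u x‖

/-- The `L^p` norm `(∫_E |g|^p)^(1/p)`, as a Lebesgue integral valued in `[0,∞]`. -/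
noncomputable def LpNormE (n : ℕ) (p : ℝ) (g : EuclideanSpace ℝ (Fin n) → ℝ)
    (E : Set (EuclideanSpace ℝ (Fin n))) : ℝ≥0∞ :=
  (∫⁻ x in E, ENNReal.ofReal (|g x| ^ p)) ^ (1 / p)

/-- The last (`n`-th) coordinate `x_n` of a point of `ℝⁿ`. -/
def lastC (n : ℕ) (hn : 1 ≤ n) (x : EuclideanSpace ℝ (Fin n)) : ℝ := x ⟨n - 1, by omega⟩

/-- The open half-ball `B_R⁺ = {|x| < R, x_n > 0}`. -/
def halfBall (n : ℕ) (hn : 1 ≤ n) (R : ℝ) : Set (EuclideanSpace ℝ (Fin n)) :=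
  {x | ‖x‖ < R ∧ 0 < lastC n hn x}

/-- The flat boundary part `B_R⁰ = {|x| ≤ R, x_n = 0}`. -/
def flatB (n : ℕ) (hn : 1 ≤ n) (R : ℝ) : Set (EuclideanSpace ℝ (Fin n)) :=
  {x | ‖x‖ ≤ R ∧ lastC n hn x = 0}

/-- The norm `‖g‖_{L^{p,q}(B_R⁺)} = ‖g‖_{L^p(B_R⁺)} + ‖g‖_{L^q(B_R⁺ ∩ {x_n < d0})}`. -/
noncomputable def LpqNormHB (n : ℕ) (hn : 1 ≤ n) (p q d0 R : ℝ)
    (g : EuclideanSpace ℝ (Fin n) → ℝ) : ℝ≥0∞ :=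
  LpNormE n p g (halfBall n hn R) +
    LpNormE n q g {x ∈ halfBall n hn R | lastC n hn x < d0}

/-- The open cube `Q_ρ` of side `ρ` centered at `(0,…,0,ρ/2)`. -/
def cubeQ (n : ℕ) (hn : 1 ≤ n) (ρ : ℝ) : Set (EuclideanSpace ℝ (Fin n)) :=
  {x | (∀ i : Fin n, i.1 ≠ n - 1 → |x i| < ρ / 2) ∧ 0 < lastC n hn x ∧ lastC n hn x < ρ}

/-- The norm `‖g‖_{L^{p,q}(Q₂)} = ‖g‖_{L^p(Q₂)} + ‖g‖_{L^q(Q₂ ∩ {x_n < d0})}`. -/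
noncomputable def LpqNormQ (n : ℕ) (hn : 1 ≤ n) (p q d0 : ℝ)
    (g : EuclideanSpace ℝ (Fin n) → ℝ) : ℝ≥0∞ :=
  LpNormE n p g (cubeQ n hn 2) +
    LpNormE n q g {x ∈ cubeQ n hn 2 | lastC n hn x < d0}

section
open scoped MatrixOrder

lemma wh_trace_mul_nonneg {n : ℕ} {A H : Matrix (Fin n) (Fin n) ℝ} (hA : A.PosSemidef)
    (hH : H.PosSemidef) : 0 ≤ (A * H).trace := by
  obtain ⟨C, rfl⟩ := CStarAlgebra.nonneg_iff_eq_star_mul_self.mp hH.nonneg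
  rw [Matrix.star_eq_conjTranspose]
  rw [← Matrix.mul_assoc, Matrix.trace_mul_comm, ← Matrix.mul_assoc]
  exact (hA.mul_mul_conjTranspose_same C).trace_nonneg
end

lemma wh_pucci_lower {n : ℕ} {lam Lam κ : ℝ} (hLam : lam ≤ Lam) {H P : Matrix (Fin n) (Fin n) ℝ}
    (hH : H.PosSemidef)
    (hP : ∀ A : Matrix (Fin n) (Fin n) ℝ,
      (A - lam • (1 : Matrix (Fin n) (Fin n) ℝ)).PosSemidef →
      (Lam • (1 : Matrix (Fin n) (Fin n) ℝ) - A).PosSemidef → κ ≤ (A * P).trace) :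
    lam * H.trace + κ ≤ pucciMinus n lam Lam (H + P) := by
  apply le_csInf
  · refine ⟨_, lam • 1, ?_, ?_, ?_, rfl⟩
    · simp [Matrix.IsSymm]
    · simpa using Matrix.PosSemidef.zero
    · rw [← sub_smul]
      exact Matrix.PosSemidef.one.smul (sub_nonneg.2 hLam)
  · rintro t ⟨A, -, h1, h2, rfl⟩
    have h3 := wh_trace_mul_nonneg h1 hH
    have h4 := hP A h1 h2
    rw [Matrix.mul_add, Matrix.trace_add]
    rw [Matrix.sub_mul, Matrix.trace_sub, Matrix.smul_mul, Matrix.one_mul, Matrix.trace_smul] at h3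
    simp only [smul_eq_mul] at h3
    linarith

lemma wh_det_le {n : ℕ} (hn : 2 ≤ n) {H : Matrix (Fin n) (Fin n) ℝ} (hH : H.PosSemidef) :
    |H.det| ≤ (H.trace / n) ^ n := by
  have hn0 : (n:ℝ) ≠ 0 := by positivity
  rw [abs_of_nonneg hH.det_nonneg, hH.1.det_eq_prod_eigenvalues, hH.1.trace_eq_sum_eigenvalues]
  have := Real.geom_mean_le_arith_mean_weighted Finset.univ (fun _ => 1 / (n:ℝ))
    hH.1.eigenvalues (fun _ _ => by positivity) (by simp [hn0]) (fun i _ => hH.eigenvalues_nonneg i)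
  rw [Real.finsetProd_rpow _ _ (fun i _ => hH.eigenvalues_nonneg i), ← Finset.mul_sum] at this
  have h0 : 0 ≤ ∏ i, hH.1.eigenvalues i := Finset.prod_nonneg fun i _ => hH.eigenvalues_nonneg i
  have h2 := pow_le_pow_left₀ (by positivity) this n
  rw [← Real.rpow_natCast, ← Real.rpow_mul h0, one_div_mul_cancel hn0, Real.rpow_one] at h2
  simp only [RCLike.ofReal_real_eq_id, id]
  rw [div_eq_inv_mul, ← one_div]
  exact h2

/-- Second order necessary condition. -/
lemma wh_second_order {E : Type*} [NormedAddCommGroup E] [NormedSpace ℝ E] {g : E → ℝ} {x : E}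
    (hg : ContDiffAt ℝ 2 g x) (hmin : IsLocalMin g x) (v : E) :
    0 ≤ fderiv ℝ (fderiv ℝ g) x v v := by
  have hev : ∀ᶠ y in nhds x, DifferentiableAt ℝ g y := by
    filter_upwards [hg.eventually (by simp)] with y hy using hy.differentiableAt (by simp)
  have hline : ContinuousAt (fun s : ℝ => x + s • v) 0 := by fun_prop
  have hl : Filter.Tendsto (fun s : ℝ => x + s • v) (nhds 0) (nhds x) := by
    have := hline.tendsto; simpa using this
  have hd1 : ∀ᶠ s in nhds (0:ℝ), deriv (fun s : ℝ => g (x + s • v)) s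
      = fderiv ℝ g (x + s • v) v := by
    filter_upwards [hl.eventually hev] with s hs
    have h1 : HasDerivAt (fun s : ℝ => x + s • v) v s := by
      simpa using ((hasDerivAt_id s).smul_const v).const_add x
    exact (hs.hasFDerivAt.comp_hasDerivAt s h1).deriv
  have hdd : DifferentiableAt ℝ (fderiv ℝ g) x :=
    (hg.fderiv_right (m := 1) (by norm_num)).differentiableAt (by simp)
  have hd2 : deriv (deriv (fun s : ℝ => g (x + s • v))) 0 = fderiv ℝ (fderiv ℝ g) x v v := by
    rw [Filter.EventuallyEq.deriv_eq hd1]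
    have h1 : HasDerivAt (fun s : ℝ => x + s • v) v 0 := by
      simpa using ((hasDerivAt_id (0:ℝ)).smul_const v).const_add x
    have h2 : HasFDerivAt (fderiv ℝ g) (fderiv ℝ (fderiv ℝ g) x) (x + (0:ℝ) • v) := by
      simpa using hdd.hasFDerivAt
    have h3 := h2.comp_hasDerivAt (0:ℝ) h1
    exact (h3.clm_apply (hasDerivAt_const (0:ℝ) v)).deriv.trans (by simp)
  have hmin' : IsLocalMin (fun s : ℝ => g (x + s • v)) 0 := by
    have := hl.eventually hmin
    filter_upwards [this] with s hs
    simpa using hs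
  by_contra! hneg
  have hc : ContinuousAt (fun s : ℝ => g (x + s • v)) 0 := by
    apply ContinuousAt.comp (g := g) _ hline
    simpa using hg.continuousAt
  have hmax := isLocalMax_of_deriv_deriv_neg (by rw [hd2]; exact hneg) hmin'.deriv_eq_zero hc
  have heq : (fun s : ℝ => g (x + s • v)) =ᶠ[nhds 0] fun _ => g (x + (0:ℝ) • v) := by
    filter_upwards [hmin', hmax] with s h1 h2
    exact le_antisymm h2 h1
  have h1 := heq.deriv
  have h2 := h1.deriv_eq
  rw [hd2] at h2
  simp at h2
  linarith

lemma wh_hess_eq {n : ℕ} {w : EuclideanSpace ℝ (Fin n) → ℝ} {x : EuclideanSpace ℝ (Fin n)}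
    (h : DifferentiableAt ℝ (fderiv ℝ w) x) (i j : Fin n) :
    hess n w x i j = fderiv ℝ (fderiv ℝ w) x (EuclideanSpace.single i 1)
      (EuclideanSpace.single j 1) := by
  unfold hess
  have := (h.hasFDerivAt.clm_apply
    (hasFDerivAt_const (EuclideanSpace.single j (1:ℝ)) x)).fderiv
  rw [this]
  simp

lemma wh_vec_sum {n : ℕ} (v : EuclideanSpace ℝ (Fin n)) :
    v = ∑ i, v i • EuclideanSpace.single i (1:ℝ) := by
  ext j
  simp [Finset.sum_apply, Pi.single_apply]

lemma wh_diff2 {n : ℕ} {w : EuclideanSpace ℝ (Fin n) → ℝ} {x : EuclideanSpace ℝ (Fin n)}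
    (h : ContDiffAt ℝ 2 w x) : DifferentiableAt ℝ (fderiv ℝ w) x :=
  (h.fderiv_right (m := 1) (by norm_num)).differentiableAt (by simp)

lemma wh_hess_posSemidef {n : ℕ} {w : EuclideanSpace ℝ (Fin n) → ℝ}
    {x : EuclideanSpace ℝ (Fin n)} (h : ContDiffAt ℝ 2 w x)
    (hpos : ∀ v, 0 ≤ fderiv ℝ (fderiv ℝ w) x v v) : (hess n w x).PosSemidef := by
  have hd := wh_diff2 h
  apply Matrix.PosSemidef.of_dotProduct_mulVec_nonneg
  · ext i j
    simp only [Matrix.conjTranspose_apply, star_trivial]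
    rw [wh_hess_eq hd, wh_hess_eq hd]
    exact (h.isSymmSndFDerivAt (by simp)).eq _ _
  · intro v
    have := hpos (WithLp.toLp 2 v)
    rw [wh_vec_sum (WithLp.toLp 2 v)] at this
    simp only [map_sum, map_smul, sum_apply, smul_apply,
      smul_eq_mul, ← wh_hess_eq hd] at this
    simp only [star_trivial, dotProduct, Matrix.mulVec]
    refine this.trans_eq ?_
    simp only [Finset.mul_sum]
    rw [Finset.sum_comm]
    exact Finset.sum_congr rfl fun i _ => Finset.sum_congr rfl fun j _ => by ring

/-- the gradient in coordinates -/
noncomputable def whGrad (n : ℕ) (w : EuclideanSpace ℝ (Fin n) → ℝ)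
    (x : EuclideanSpace ℝ (Fin n)) : EuclideanSpace ℝ (Fin n) :=
  WithLp.toLp 2 fun j => fderiv ℝ w x (EuclideanSpace.single j 1)

noncomputable def whHL (n : ℕ) (w : EuclideanSpace ℝ (Fin n) → ℝ)
    (x : EuclideanSpace ℝ (Fin n)) : EuclideanSpace ℝ (Fin n) →L[ℝ] EuclideanSpace ℝ (Fin n) :=
  LinearMap.toContinuousLinearMap (Matrix.toLin (EuclideanSpace.basisFun (Fin n) ℝ).toBasis
    (EuclideanSpace.basisFun (Fin n) ℝ).toBasis (hess n w x).transpose)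

lemma whHL_det {n : ℕ} (w : EuclideanSpace ℝ (Fin n) → ℝ) (x : EuclideanSpace ℝ (Fin n)) :
    (whHL n w x).det = (hess n w x).det := by
  unfold whHL ContinuousLinearMap.det
  rw [LinearMap.coe_toContinuousLinearMap, LinearMap.det_toLin, Matrix.det_transpose]

lemma whGrad_hasFDerivAt {n : ℕ} {w : EuclideanSpace ℝ (Fin n) → ℝ}
    {x : EuclideanSpace ℝ (Fin n)} (h : ContDiffAt ℝ 2 w x) :
    HasFDerivAt (whGrad n w) (whHL n w x) x := by
  have hd := wh_diff2 h
  rw [← hasFDerivWithinAt_univ, hasFDerivWithinAt_euclidean]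
  intro j
  rw [hasFDerivWithinAt_univ]
  have := (hd.hasFDerivAt.clm_apply
    (hasFDerivAt_const (EuclideanSpace.single j (1:ℝ)) x))
  refine this.congr_fderiv ?_
  ext v
  conv_lhs => rw [wh_vec_sum v]
  simp [whHL, Matrix.toLin_apply, Matrix.mulVec, dotProduct, ← wh_hess_eq hd, Pi.single_apply, mul_comm]

lemma wh_abp {n : ℕ} (hn : 2 ≤ n) {w : EuclideanSpace ℝ (Fin n) → ℝ}
    {U : Set (EuclideanSpace ℝ (Fin n))} (hU : IsOpen U) (hw : ContDiffOn ℝ 2 w U)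
    {z x0 : EuclideanSpace ℝ (Fin n)} {R m ρ : ℝ} (hR : 0 < R) (hρ : 0 < ρ)
    (hsub : Metric.closedBall z R ⊆ U)
    (hbd : ∀ x, dist x z = R → 0 ≤ w x) (hx0 : x0 ∈ Metric.closedBall z R)
    (hwx0 : w x0 ≤ -m) (hm : ρ * (2 * R) ≤ m) :
    ∃ S : Set (EuclideanSpace ℝ (Fin n)), MeasurableSet S ∧ S ⊆ Metric.closedBall z R ∧
      (∀ x ∈ S, w x ≤ 0 ∧ ‖fderiv ℝ w x‖ ≤ ρ ∧ (hess n w x).PosSemidef) ∧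
      volume (Metric.ball (0 : EuclideanSpace ℝ (Fin n)) ρ) ≤
        ∫⁻ x in S, ENNReal.ofReal (((hess n w x).trace / n) ^ n) := by
  have hC2 : ∀ x ∈ U, ContDiffAt ℝ 2 w x := fun x hx => hw.contDiffAt (hU.mem_nhds hx)
  have hc0 : ContinuousOn w (Metric.closedBall z R) := hw.continuousOn.mono hsub
  have hc1 : ContinuousOn (fderiv ℝ w) (Metric.closedBall z R) := fun x hx =>
    ((wh_diff2 (hC2 x (hsub hx))).continuousAt).continuousWithinAt
  have hc2 : ContinuousOn (fderiv ℝ (fderiv ℝ w)) (Metric.closedBall z R) := fun x hx =>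
    ((((hC2 x (hsub hx)).fderiv_right (m := 1) (by norm_num)).fderiv_right (m := 0)
      (by norm_num)).continuousAt).continuousWithinAt
  let S : Set (EuclideanSpace ℝ (Fin n)) := (Metric.closedBall z R ∩ {x | w x ≤ 0}) ∩
    ((Metric.closedBall z R ∩ {x | ‖fderiv ℝ w x‖ ≤ ρ}) ∩
     ⋂ v, (Metric.closedBall z R ∩ {x | 0 ≤ fderiv ℝ (fderiv ℝ w) x v v}))
  have hSm : MeasurableSet S := by
    apply IsClosed.measurableSet
    refine IsClosed.inter ?_ (IsClosed.inter ?_ (isClosed_iInter fun v => ?_))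
    · exact hc0.preimage_isClosed_of_isClosed Metric.isClosed_closedBall isClosed_Iic
    · exact hc1.norm.preimage_isClosed_of_isClosed Metric.isClosed_closedBall isClosed_Iic
    · exact ((hc2.clm_apply continuousOn_const).clm_apply
        continuousOn_const).preimage_isClosed_of_isClosed Metric.isClosed_closedBall isClosed_Ici
  have hS1 : S ⊆ Metric.closedBall z R := fun x hx => hx.1.1
  have hSP : ∀ x ∈ S, (hess n w x).PosSemidef := fun x hx =>
    wh_hess_posSemidef (hC2 x (hsub (hS1 hx))) fun v => (Set.mem_iInter.1 hx.2.2 v).2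
  refine ⟨S, hSm, hS1, fun x hx => ⟨hx.1.2, hx.2.1.2, hSP x hx⟩, ?_⟩
  have hcover : Metric.ball (0 : EuclideanSpace ℝ (Fin n)) ρ ⊆ whGrad n w '' S := by
    intro p hp
    rw [mem_ball_zero_iff] at hp
    have hgc : ContinuousOn (fun x => w x - inner ℝ p x) (Metric.closedBall z R) := by
      fun_prop
    obtain ⟨x, hx, hxmin⟩ := (isCompact_closedBall z R).exists_isMinOn ⟨x0, hx0⟩ hgc
    have hle : w x - inner ℝ p x ≤ w x0 - inner ℝ p x0 := hxmin hx0
    have hin : |inner ℝ p (x - x0)| ≤ ‖p‖ * ‖x - x0‖ := abs_real_inner_le_norm _ _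
    have hdist : ‖x - x0‖ ≤ 2 * R := by
      rw [← dist_eq_norm]
      have := dist_triangle_right x x0 z
      rw [Metric.mem_closedBall] at hx hx0
      linarith
    have hwx : w x < 0 := by
      rw [inner_sub_right] at hin
      have h1 := le_of_abs_le hin
      have h2 : ‖p‖ * ‖x - x0‖ ≤ ‖p‖ * (2 * R) := by gcongr
      have h3 : ‖p‖ * (2 * R) < ρ * (2 * R) := by gcongr
      linarith
    have hxint : x ∈ Metric.ball z R := by
      rw [Metric.mem_ball]
      refine lt_of_le_of_ne hx fun h => ?_
      linarith [hbd x h]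
    have hxU := hsub hx
    have hlin : ∀ y, HasFDerivAt (fun x => inner ℝ p x) (innerSL ℝ p) y := fun y =>
      (innerSL ℝ p).hasFDerivAt
    have hgC2 : ContDiffAt ℝ 2 (fun x => w x - inner ℝ p x) x :=
      (hC2 x hxU).sub (innerSL ℝ p).contDiff.contDiffAt
    have hloc : IsLocalMin (fun x => w x - inner ℝ p x) x :=
      hxmin.isLocalMin (Filter.mem_of_superset (Metric.isOpen_ball.mem_nhds hxint)
        Metric.ball_subset_closedBall)
    have hfd : ∀ y ∈ U, fderiv ℝ (fun x => w x - inner ℝ p x) y = fderiv ℝ w y - innerSL ℝ p :=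
      fun y hy => (((hC2 y hy).differentiableAt (by simp)).hasFDerivAt.sub (hlin y)).fderiv
    have hgrad : fderiv ℝ w x = innerSL ℝ p := by
      have := hloc.fderiv_eq_zero
      rw [hfd x hxU] at this
      exact sub_eq_zero.1 this
    have hfd2 : fderiv ℝ (fderiv ℝ (fun x => w x - inner ℝ p x)) x
        = fderiv ℝ (fderiv ℝ w) x := by
      have : fderiv ℝ (fun x => w x - inner ℝ p x) =ᶠ[nhds x]
          fun y => fderiv ℝ w y - innerSL ℝ p := by
        filter_upwards [hU.mem_nhds hxU] with y hy using hfd y hy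
      rw [this.fderiv_eq, fderiv_sub_const]
    refine ⟨x, ⟨⟨hx, hwx.le⟩, ⟨hx, ?_⟩, Set.mem_iInter.2 fun v => ⟨hx, ?_⟩⟩, ?_⟩
    · simp only [Set.mem_ofPred_eq, hgrad, innerSL_apply_norm]
      exact hp.le
    · have := wh_second_order hgC2 hloc v
      rwa [hfd2] at this
    · ext j
      simp [whGrad, hgrad, EuclideanSpace.inner_single_right]
  calc volume (Metric.ball (0 : EuclideanSpace ℝ (Fin n)) ρ)
      ≤ volume (whGrad n w '' S) := measure_mono hcover
    _ ≤ ∫⁻ x in S, ENNReal.ofReal |(whHL n w x).det| :=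
        addHaar_image_le_lintegral_abs_det_fderiv volume hSm fun x hx =>
          (whGrad_hasFDerivAt (hC2 x (hsub (hS1 hx)))).hasFDerivWithinAt
    _ ≤ _ := by
        refine setLIntegral_mono_ae' hSm (Filter.Eventually.of_forall fun x hx => ?_)
        rw [whHL_det]
        exact ENNReal.ofReal_le_ofReal (wh_det_le hn (hSP x hx))

/-- The radial quantity `1 + |x-z|²/r²`. -/
noncomputable def whS {n : ℕ} (z : EuclideanSpace ℝ (Fin n)) (r : ℝ)
    (x : EuclideanSpace ℝ (Fin n)) : ℝ := ‖x - z‖ ^ 2 / r ^ 2 + 1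

/-- The barrier. -/
noncomputable def whPhi {n : ℕ} (z : EuclideanSpace ℝ (Fin n)) (r a k : ℝ) (m : ℤ)
    (x : EuclideanSpace ℝ (Fin n)) : ℝ := a * whS z r x ^ m - k

lemma whS_one_le {n : ℕ} (z : EuclideanSpace ℝ (Fin n)) (r : ℝ) (x : EuclideanSpace ℝ (Fin n)) :
    1 ≤ whS z r x := by
  unfold whS
  have : 0 ≤ ‖x - z‖ ^ 2 / r ^ 2 := by positivity
  linarith

lemma whS_pos {n : ℕ} (z : EuclideanSpace ℝ (Fin n)) (r : ℝ) (x : EuclideanSpace ℝ (Fin n)) :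
    0 < whS z r x := lt_of_lt_of_le one_pos (whS_one_le z r x)

lemma whS_contDiff {n : ℕ} (z : EuclideanSpace ℝ (Fin n)) (r : ℝ) :
    ContDiff ℝ 2 (whS z r) := by
  unfold whS
  exact (((contDiff_id.sub contDiff_const).norm_sq ℝ).div_const _).add contDiff_const

lemma whPhi_contDiff {n : ℕ} (z : EuclideanSpace ℝ (Fin n)) (r a k : ℝ) (α : ℕ) :
    ContDiff ℝ 2 (whPhi z r a k (-(α : ℤ))) := by
  unfold whPhi
  simp only [zpow_neg, zpow_natCast]
  refine (contDiff_const.mul (ContDiff.inv ((whS_contDiff z r).pow α) fun x => ?_)).sub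
    contDiff_const
  exact (pow_pos (whS_pos z r x) α).ne'

lemma whS_hasFDerivAt {n : ℕ} (z : EuclideanSpace ℝ (Fin n)) (r : ℝ)
    (x : EuclideanSpace ℝ (Fin n)) :
    HasFDerivAt (whS z r) ((2 / r ^ 2) • innerSL ℝ (x - z)) x := by
  unfold whS
  have h := (((hasFDerivAt_id x).sub_const z).norm_sq.mul_const (r ^ 2)⁻¹).add_const (1:ℝ)
  simp only [id] at h
  refine (h.congr_fderiv ?_)
  ext v
  simp
  ring

lemma whPhi_hasFDerivAt {n : ℕ} (z : EuclideanSpace ℝ (Fin n)) (r a k : ℝ) (m : ℤ)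
    (x : EuclideanSpace ℝ (Fin n)) :
    HasFDerivAt (whPhi z r a k m)
      ((a * (m * whS z r x ^ (m - 1)) * (2 / r ^ 2)) • innerSL ℝ (x - z)) x := by
  unfold whPhi
  have h := ((((hasDerivAt_zpow m (whS z r x) (Or.inl (whS_pos z r x).ne')).comp_hasFDerivAt x
    (whS_hasFDerivAt z r x)).const_mul a).sub_const k)
  refine h.congr_fderiv ?_
  ext v
  simp
  ring

lemma whPhi_hess {n : ℕ} (z : EuclideanSpace ℝ (Fin n)) (r a k : ℝ) (m : ℤ)
    (x : EuclideanSpace ℝ (Fin n)) :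
    hess n (whPhi z r a k m) x =
      (a * m * (m - 1) * whS z r x ^ (m - 2) * (4 / r ^ 4)) •
        Matrix.vecMulVec (x - z).ofLp (x - z).ofLp
      + (a * m * whS z r x ^ (m - 1) * (2 / r ^ 2)) • (1 : Matrix (Fin n) (Fin n) ℝ) := by
  ext i j
  unfold hess
  have h1 : (fun y => fderiv ℝ (whPhi z r a k m) y (EuclideanSpace.single j (1:ℝ))) =
      fun y => (a * m * (2 / r ^ 2)) * (whS z r y ^ (m - 1) * (y j - z j)) := by
    funext y
    rw [(whPhi_hasFDerivAt z r a k m y).fderiv]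
    simp [EuclideanSpace.inner_single_right]
    ring
  rw [h1]
  have h2 : HasFDerivAt (fun y : EuclideanSpace ℝ (Fin n) => y j - z j)
      (EuclideanSpace.proj j : EuclideanSpace ℝ (Fin n) →L[ℝ] ℝ) x :=
    ((EuclideanSpace.proj j : EuclideanSpace ℝ (Fin n) →L[ℝ] ℝ).hasFDerivAt).sub_const _
  have h3 := (hasDerivAt_zpow (m - 1) (whS z r x) (Or.inl (whS_pos z r x).ne')).comp_hasFDerivAt x
    (whS_hasFDerivAt z r x)
  have h4 := (h3.mul h2).const_mul (a * m * (2 / r ^ 2))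
  have h5 := h4.fderiv
  simp only [Function.comp_def] at h5
  change fderiv ℝ (fun y => (a * m * (2 / r ^ 2)) * (whS z r y ^ (m - 1) * (y j - z j))) x = _ at h5
  rw [h5]
  have hm : m - 1 - 1 = m - 2 := by ring
  by_cases hij : i = j
  · subst hij
    simp [Matrix.vecMulVec_apply, EuclideanSpace.inner_single_right, hm]
    ring
  · simp [Matrix.vecMulVec_apply, EuclideanSpace.inner_single_right, hm, hij,
      Ne.symm hij]
    ring

lemma whPhi_grad_le {n : ℕ} (z : EuclideanSpace ℝ (Fin n)) {r a : ℝ} (k : ℝ) (α : ℕ)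
    (hr : 0 < r) (ha : 0 ≤ a) (x : EuclideanSpace ℝ (Fin n)) :
    ‖fderiv ℝ (whPhi z r a k (-(α:ℤ))) x‖ ≤ 2 * a * α / r := by
  rw [(whPhi_hasFDerivAt z r a k _ x).fderiv, norm_smul, innerSL_apply_norm]
  have hS := whS_pos z r x
  have h1 : ‖x - z‖ / r ≤ whS z r x := by
    unfold whS
    rw [← div_pow]
    nlinarith [sq_nonneg (‖x - z‖ / r - 1), sq_nonneg (‖x - z‖ / r)]
  have h2 : whS z r x ^ (-(α:ℤ) - 1) * whS z r x ≤ 1 := by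
    rw [← zpow_add_one₀ hS.ne', sub_add_cancel]
    exact zpow_le_one_of_nonpos₀ (whS_one_le z r x) (by simp)
  have h3 : 0 < whS z r x ^ (-(α:ℤ) - 1) := zpow_pos hS _
  have h4 : whS z r x ^ (-(α:ℤ) - 1) * (‖x - z‖ / r) ≤ 1 :=
    le_trans (by gcongr) h2
  have h5 : ‖a * (((-(α:ℤ) : ℤ) : ℝ) * whS z r x ^ (-(α:ℤ) - 1)) * (2 / r ^ 2)‖ =
      a * α * whS z r x ^ (-(α:ℤ) - 1) * (2 / r ^ 2) := by
    rw [Real.norm_eq_abs, abs_mul, abs_mul, abs_mul, abs_of_nonneg ha, abs_of_pos h3,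
      abs_of_nonneg (by positivity : (0:ℝ) ≤ 2 / r ^ 2)]
    push_cast
    rw [abs_neg, Nat.abs_cast]
    ring
  rw [h5]
  calc _ = (2 * a * α / r) * (whS z r x ^ (-(α:ℤ) - 1) * (‖x - z‖ / r)) := by field_simp
    _ ≤ (2 * a * α / r) * 1 := by gcongr
    _ = _ := mul_one _

lemma whPhi_trace {n : ℕ} (z : EuclideanSpace ℝ (Fin n)) {r a lam Lam : ℝ} (k : ℝ) (α : ℕ)
    (hlam : 0 < lam) (hLam : lam ≤ Lam)
    (hr : 0 < r) (ha : 0 ≤ a) (hα : n * Lam ≤ (α + 1) * lam) (x : EuclideanSpace ℝ (Fin n))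
    (A : Matrix (Fin n) (Fin n) ℝ)
    (h1 : (A - lam • (1 : Matrix (Fin n) (Fin n) ℝ)).PosSemidef)
    (h2 : (Lam • (1 : Matrix (Fin n) (Fin n) ℝ) - A).PosSemidef) :
    (Metric.ball z r).indicator (fun _ => -(2 * a * α * (n * Lam) / r ^ 2)) x
      ≤ (A * hess n (whPhi z r a k (-(α:ℤ))) x).trace := by
  have hS := whS_pos z r x
  have hLam0 : 0 < Lam := hlam.trans_le hLam
  set y : Fin n → ℝ := (x - z).ofLp with hy
  have hyn : ‖x - z‖ ^ 2 = y ⬝ᵥ y := by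
    rw [EuclideanSpace.real_norm_sq_eq]; simp [dotProduct, hy, sq]
  have hq : lam * ‖x - z‖ ^ 2 ≤ y ⬝ᵥ A.mulVec y := by
    have := h1.dotProduct_mulVec_nonneg y
    rw [Matrix.sub_mulVec, dotProduct_sub, Matrix.smul_mulVec, Matrix.one_mulVec] at this
    simp only [star_trivial, dotProduct_smul, smul_eq_mul] at this
    rw [hyn]; linarith
  have hq0 : 0 ≤ y ⬝ᵥ A.mulVec y := le_trans (by positivity) hq
  have htr : A.trace ≤ n * Lam := by
    have := h2.trace_nonneg
    rw [Matrix.trace_sub, Matrix.trace_smul, Matrix.trace_one] at this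
    simp at this
    linarith
  have hvv : (A * Matrix.vecMulVec y y).trace = y ⬝ᵥ A.mulVec y := by
    rw [Matrix.mul_vecMulVec, Matrix.trace_vecMulVec, dotProduct_comm]
  have hform : (A * hess n (whPhi z r a k (-(α:ℤ))) x).trace =
      (2 * a * α / r ^ 2) * whS z r x ^ (-(α:ℤ) - 2) *
        ((α + 1) * (2 / r ^ 2) * (y ⬝ᵥ A.mulVec y) - whS z r x * A.trace) := by
    rw [whPhi_hess, Matrix.mul_add, Matrix.trace_add, Matrix.mul_smul, Matrix.mul_smul,
      Matrix.trace_smul, Matrix.trace_smul, hvv, Matrix.mul_one]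
    have : whS z r x ^ (-(α:ℤ) - 1) = whS z r x ^ (-(α:ℤ) - 2) * whS z r x := by
      rw [← zpow_add_one₀ hS.ne']; congr 1; ring
    rw [this]
    push_cast
    simp only [smul_eq_mul]
    field_simp
    ring
  rw [hform]
  have h3 : 0 < whS z r x ^ (-(α:ℤ) - 2) := zpow_pos hS _
  by_cases hx : x ∈ Metric.ball z r
  · rw [Set.indicator_of_mem hx]
    have h4 : whS z r x ^ (-(α:ℤ) - 2) * whS z r x ≤ 1 := by
      rw [← zpow_add_one₀ hS.ne']
      exact zpow_le_one_of_nonpos₀ (whS_one_le z r x) (by omega)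
    have h5 : -(n * Lam) ≤ whS z r x ^ (-(α:ℤ) - 2) *
        ((α + 1) * (2 / r ^ 2) * (y ⬝ᵥ A.mulVec y) - whS z r x * A.trace) := by
      have e1 : 0 ≤ whS z r x ^ (-(α:ℤ) - 2) * ((α + 1) * (2 / r ^ 2) * (y ⬝ᵥ A.mulVec y)) := by
        positivity
      have e2 : whS z r x ^ (-(α:ℤ) - 2) * whS z r x * A.trace ≤
          whS z r x ^ (-(α:ℤ) - 2) * whS z r x * (n * Lam) := by gcongr
      have e3 : whS z r x ^ (-(α:ℤ) - 2) * whS z r x * (n * Lam) ≤ 1 * (n * Lam) := by gcongr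
      linarith
    calc -(2 * a * α * (n * Lam) / r ^ 2) = (2 * a * α / r ^ 2) * (-(n * Lam)) := by ring
      _ ≤ (2 * a * α / r ^ 2) * _ := mul_le_mul_of_nonneg_left h5 (by positivity)
      _ = _ := by ring
  · rw [Set.indicator_of_notMem hx]
    apply mul_nonneg (by positivity)
    have hxr : r ≤ ‖x - z‖ := by
      rw [Metric.mem_ball, not_lt, dist_eq_norm] at hx; exact hx
    have hS2 : whS z r x ≤ 2 * (‖x - z‖ ^ 2 / r ^ 2) := by
      unfold whS
      have : 1 ≤ ‖x - z‖ ^ 2 / r ^ 2 := by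
        rw [le_div_iff₀ (by positivity), one_mul]; gcongr
      linarith
    have e1 : whS z r x * A.trace ≤ whS z r x * (n * Lam) := by gcongr
    have e2 : whS z r x * (n * Lam) ≤ (2 * (‖x - z‖ ^ 2 / r ^ 2)) * ((α + 1) * lam) := by
      gcongr
    have e3 : (α + 1) * (2 / r ^ 2) * (lam * ‖x - z‖ ^ 2) ≤
      (α + 1) * (2 / r ^ 2) * (y ⬝ᵥ A.mulVec y) := by gcongr
    have e4 : (2 * (‖x - z‖ ^ 2 / r ^ 2)) * ((α + 1) * lam) =
      (α + 1) * (2 / r ^ 2) * (lam * ‖x - z‖ ^ 2) := by ring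
    linarith

lemma wh_add3_pow {X Y Z : ℝ} (n : ℕ) (hX : 0 ≤ X) (hY : 0 ≤ Y) (hZ : 0 ≤ Z) :
    (X + Y + Z) ^ n ≤ 3 ^ n * (X ^ n + Y ^ n + Z ^ n) := by
  have hX' := pow_nonneg hX n
  have hY' := pow_nonneg hY n
  have hZ' := pow_nonneg hZ n
  have key : ∀ W : ℝ, 0 ≤ W → X ≤ W → Y ≤ W → Z ≤ W → (X + Y + Z) ^ n ≤ 3 ^ n * W ^ n := by
    intro W _ h1 h2 h3
    rw [← mul_pow]
    exact pow_le_pow_left₀ (by positivity) (by linarith) n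
  have h3 : (0:ℝ) < 3 ^ n := by positivity
  rcases le_total X Y with h | h <;> rcases le_total Y Z with h' | h' <;>
    rcases le_total X Z with h'' | h''
  all_goals first
    | exact (key X hX (by linarith) (by linarith) (by linarith)).trans (by gcongr; linarith)
    | exact (key Y hY (by linarith) (by linarith) (by linarith)).trans (by gcongr; linarith)
    | exact (key Z hZ (by linarith) (by linarith) (by linarith)).trans (by gcongr; linarith)

lemma wh_hess_sub {n : ℕ} {u φ : EuclideanSpace ℝ (Fin n) → ℝ} {x : EuclideanSpace ℝ (Fin n)}
    (hu : ContDiffAt ℝ 2 u x) (hφ : ContDiff ℝ 2 φ) :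
    hess n u x = hess n (fun y => u y - φ y) x + hess n φ x := by
  have hw : ContDiffAt ℝ 2 (fun y => u y - φ y) x := hu.sub hφ.contDiffAt
  ext i j
  rw [Matrix.add_apply, wh_hess_eq (wh_diff2 hu), wh_hess_eq (wh_diff2 hw),
    wh_hess_eq (wh_diff2 hφ.contDiffAt)]
  have h1 : fderiv ℝ (fun y => u y - φ y) =ᶠ[nhds x] fun y => fderiv ℝ u y - fderiv ℝ φ y := by
    filter_upwards [hu.eventually (by simp)] with y hy
    exact fderiv_fun_sub (hy.differentiableAt (by simp)) (hφ.contDiffAt.differentiableAt (by simp))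
  rw [h1.fderiv_eq, fderiv_fun_sub (wh_diff2 hu) (wh_diff2 hφ.contDiffAt)]
  simp

set_option maxHeartbeats 1000000 in
/-- Integrated form, no constants chosen yet. -/
lemma wh_key_aux (n : ℕ) (hn : 2 ≤ n) (lam Lam : ℝ) (hlam : 0 < lam) (hLam : lam ≤ Lam) :
    ∃ M Q : ℝ, 1 < M ∧ 0 < Q ∧
      ∀ (b f u : EuclideanSpace ℝ (Fin n) → ℝ) (t r : ℝ) (z x0 : EuclideanSpace ℝ (Fin n)),
        0 < t → 0 < r → Metric.closedBall z (4 * r) ⊆ Metric.ball 0 2 →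
        ContinuousOn b (Metric.ball 0 2) →
        ContinuousOn f (Metric.ball 0 2) →
        (∀ x ∈ Metric.ball (0 : EuclideanSpace ℝ (Fin n)) 2, 0 ≤ b x) →
        ContDiffOn ℝ 2 u (Metric.ball 0 2) →
        (∀ x ∈ Metric.ball (0 : EuclideanSpace ℝ (Fin n)) 2, 0 ≤ u x) →
        (∀ x ∈ Metric.ball (0 : EuclideanSpace ℝ (Fin n)) 2,
          pucciMinus n lam Lam (hess n u x) - b x * gradNorm n u x ≤ f x) →
        x0 ∈ Metric.closedBall z (3 * r) → u x0 ≤ t →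
        volume (Metric.ball (0 : EuclideanSpace ℝ (Fin n)) (t / (8 * r))) ≤
          ENNReal.ofReal Q * ((∫⁻ x in Metric.closedBall z (4 * r), ENNReal.ofReal (max (f x) 0 ^ n))
            + ENNReal.ofReal ((t / r) ^ n) *
              (∫⁻ x in Metric.closedBall z (4 * r), ENNReal.ofReal (b x ^ n))
            + ENNReal.ofReal ((t / r ^ 2) ^ n) * volume {x ∈ Metric.ball z r | u x ≤ M * t}) := by
  have hLam0 : 0 < Lam := hlam.trans_le hLam
  have hn0 : (0:ℝ) < n := by positivity
  obtain ⟨α, hα⟩ := exists_nat_ge (n * Lam / lam)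
  rw [div_le_iff₀ hlam] at hα
  have hα0 : 0 < α := by
    rcases Nat.eq_zero_or_pos α with h | h
    · subst h
      have : 0 < n * Lam := by positivity
      simp at hα; linarith
    · exact h
  set a3 : ℝ := (10:ℝ) ^ (-(α:ℤ)) with ha3
  set a4 : ℝ := (17:ℝ) ^ (-(α:ℤ)) with ha4
  have ha4p : 0 < a4 := by positivity
  have ha34 : a4 < a3 := by
    rw [ha3, ha4, zpow_neg, zpow_neg, zpow_natCast, zpow_natCast]
    apply inv_strictAnti₀ (by positivity)
    exact pow_lt_pow_left₀ (by norm_num) (by norm_num) hα0.ne'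
  have ha3l : a3 ≤ 1 := zpow_le_one_of_nonpos₀ (by norm_num) (by simp)
  set M : ℝ := 2 / (a3 - a4) with hM
  have hd : 0 < a3 - a4 := by linarith
  have hM1 : 1 < M := by rw [hM, lt_div_iff₀ hd]; linarith
  have hM0 : 0 < M := by linarith
  set D1 : ℝ := 1 / 8 + 2 * M * α with hD1
  set D2 : ℝ := 2 * M * α * (n * Lam) with hD2
  have hD1p : 0 < D1 := by positivity
  have hD2p : 0 ≤ D2 := by positivity
  set Q : ℝ := (1 / (n * lam)) ^ n * 3 ^ n * (1 + D1 ^ n + D2 ^ n) with hQ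
  have hQ0 : 0 < Q := by positivity
  refine ⟨M, Q, hM1, hQ0, ?_⟩
  intro b f u t r z x0 ht hr hsub hb hf hb0 hu hu0 hineq hx0 hux0
  set φ := whPhi z r (t * M) (t * M * a4) (-(α:ℤ)) with hφ
  have hφC : ContDiff ℝ 2 φ := whPhi_contDiff z r _ _ α
  have haM : 0 ≤ t * M := by positivity
  have hφle : ∀ x, φ x ≤ M * t := by
    intro x
    have h1 : whS z r x ^ (-(α:ℤ)) ≤ 1 := zpow_le_one_of_nonpos₀ (whS_one_le z r x) (by simp)
    have h2 : t * M * whS z r x ^ (-(α:ℤ)) ≤ t * M * 1 := by gcongr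
    have h3 : 0 ≤ t * M * a4 := by positivity
    simp only [hφ, whPhi]
    linarith
  have hφ3 : 2 * t ≤ φ x0 := by
    have h1 : whS z r x0 ≤ 10 := by
      unfold whS
      rw [Metric.mem_closedBall, dist_eq_norm] at hx0
      have : ‖x0 - z‖ ^ 2 / r ^ 2 ≤ 9 := by
        rw [div_le_iff₀ (by positivity)]
        calc ‖x0 - z‖ ^ 2 ≤ (3 * r) ^ 2 := by gcongr
          _ = _ := by ring
      linarith
    have h2 : a3 ≤ whS z r x0 ^ (-(α:ℤ)) := by
      rw [ha3, zpow_neg, zpow_neg, zpow_natCast, zpow_natCast]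
      have := whS_pos z r x0
      gcongr
    have h3 : t * M * a3 ≤ t * M * whS z r x0 ^ (-(α:ℤ)) := by gcongr
    have h4 : M * (a3 - a4) = 2 := by rw [hM]; field_simp
    simp only [hφ, whPhi]
    nlinarith
  have hφ4 : ∀ x, dist x z = 4 * r → φ x = 0 := by
    intro x hx
    have h1 : whS z r x = 17 := by
      unfold whS
      rw [dist_eq_norm] at hx
      rw [hx]; field_simp; norm_num
    simp only [hφ, whPhi, h1, ha4]
    ring
  have hx0' : x0 ∈ Metric.closedBall z (4 * r) :=
    Metric.closedBall_subset_closedBall (by linarith) hx0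
  obtain ⟨S, hSm, hSsub, hSP, hSvol⟩ := wh_abp hn Metric.isOpen_ball
    (hu.sub hφC.contDiffOn) (z := z) (x0 := x0) (R := 4 * r) (m := t) (ρ := t / (8 * r))
    (by positivity) (by positivity) hsub
    (fun x hx => by
      have hxm : x ∈ Metric.closedBall z (4 * r) := by
        rw [Metric.mem_closedBall]; exact hx.le
      simp only [hφ4 x hx, sub_zero]
      exact hu0 x (hsub hxm))
    hx0' (by show u x0 - φ x0 ≤ -t; linarith) (by field_simp; norm_num)
  refine hSvol.trans ?_
  have hSU : S ⊆ Metric.ball 0 2 := hSsub.trans hsub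
  have hpt : ∀ x ∈ S, ((hess n (fun x => u x - φ x) x).trace / n) ^ n ≤
      Q * (max (f x) 0 ^ n + (t / r) ^ n * b x ^ n +
        (Metric.ball z r).indicator (fun _ => (t / r ^ 2) ^ n) x) := by
    intro x hx
    obtain ⟨hw0, hwg, hwP⟩ := hSP x hx
    have hxU := hSU hx
    have huC : ContDiffAt ℝ 2 u x := hu.contDiffAt (Metric.isOpen_ball.mem_nhds hxU)
    have hP := wh_pucci_lower (lam := lam) (Lam := Lam) hLam hwP (P := hess n φ x)
      (fun A h1 h2 => whPhi_trace z (t * M * a4) α hlam hLam hr haM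
        (by nlinarith) x A h1 h2)
    rw [← wh_hess_sub huC hφC] at hP
    have hi := hineq x hxU
    have hgr : gradNorm n u x ≤ D1 * (t / r) := by
      unfold gradNorm
      have e1 : fderiv ℝ u x = fderiv ℝ (fun x => u x - φ x) x + fderiv ℝ φ x := by
        rw [fderiv_fun_sub (huC.differentiableAt (by simp))
          (hφC.contDiffAt.differentiableAt (by simp))]
        simp
      have e2 := whPhi_grad_le z (t * M * a4) α hr haM x
      have e3 : ‖fderiv ℝ u x‖ ≤ t / (8 * r) + 2 * (t * M) * α / r := by
        rw [e1]; exact (norm_add_le _ _).trans (add_le_add hwg e2)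
      refine e3.trans_eq ?_
      rw [hD1]; field_simp
    have hbx := hb0 x hxU
    have hbg : b x * gradNorm n u x ≤ b x * (D1 * (t / r)) := by gcongr
    set I : ℝ := (Metric.ball z r).indicator (fun _ => (1:ℝ)) x with hI
    have hI0 : 0 ≤ I := Set.indicator_nonneg (fun _ _ => zero_le_one) x
    have hI1 : (Metric.ball z r).indicator (fun _ => -(2 * (t * M) * α * (n * Lam) / r ^ 2)) x =
        - (D2 * (t / r ^ 2) * I) := by
      rw [hI]
      by_cases h : x ∈ Metric.ball z r
      · simp only [Set.indicator_of_mem h]; rw [hD2]; ring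
      · simp only [Set.indicator_of_notMem h]; ring
    have hI2 : (Metric.ball z r).indicator (fun _ => (t / r ^ 2) ^ n) x =
        (t / r ^ 2 * I) ^ n := by
      rw [hI]
      by_cases h : x ∈ Metric.ball z r
      · simp only [Set.indicator_of_mem h]; simp
      · simp only [Set.indicator_of_notMem h, mul_zero]; exact (zero_pow (by omega)).symm
    rw [hI1] at hP
    rw [hI2]
    set T := (hess n (fun x => u x - φ x) x).trace with hT
    have hT0 : 0 ≤ T := hwP.trace_nonneg
    set X := max (f x) 0 with hX
    have hX0 : 0 ≤ X := le_max_right _ _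
    have hfX : f x ≤ X := le_max_left _ _
    have hTle : T / n ≤ (1 / (n * lam)) *
        (X + D1 * ((t / r) * b x) + D2 * (t / r ^ 2 * I)) := by
      rw [div_le_iff₀ hn0, one_div, inv_mul_eq_div, div_mul_eq_mul_div, le_div_iff₀ (by positivity)]
      have : lam * T ≤ X + D1 * ((t / r) * b x) + D2 * (t / r ^ 2 * I) := by linarith
      calc T * (n * lam) = lam * T * n := by ring
        _ ≤ _ := mul_le_mul_of_nonneg_right this hn0.le
    have hY0 : 0 ≤ (t / r) * b x := by positivity
    have hZ0 : 0 ≤ t / r ^ 2 * I := by positivity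
    calc (T / n) ^ n ≤ ((1 / (n * lam)) *
        (X + D1 * ((t / r) * b x) + D2 * (t / r ^ 2 * I))) ^ n :=
          pow_le_pow_left₀ (by positivity) hTle n
      _ ≤ (1 / (n * lam)) ^ n * (3 ^ n * (X ^ n + (D1 * ((t / r) * b x)) ^ n +
            (D2 * (t / r ^ 2 * I)) ^ n)) := by
          rw [mul_pow]
          gcongr
          exact wh_add3_pow n hX0 (by positivity) (by positivity)
      _ ≤ (1 / (n * lam)) ^ n * (3 ^ n * ((1 + D1 ^ n + D2 ^ n) *
            (X ^ n + ((t / r) * b x) ^ n + (t / r ^ 2 * I) ^ n))) := by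
          gcongr
          rw [mul_pow D1, mul_pow D2]
          have hx1 : 0 ≤ X ^ n := by positivity
          have hy1 : 0 ≤ ((t / r) * b x) ^ n := by positivity
          have hz1 : 0 ≤ (t / r ^ 2 * I) ^ n := by positivity
          have hd1 : 0 ≤ D1 ^ n := by positivity
          have hd2 : 0 ≤ D2 ^ n := by positivity
          nlinarith [mul_nonneg hd1 hx1, mul_nonneg hd1 hz1, mul_nonneg hd2 hx1,
            mul_nonneg hd2 hy1]
      _ = _ := by rw [hQ, mul_pow (t / r)]; ring
  have hXm : AEMeasurable (fun x => ENNReal.ofReal (max (f x) 0 ^ n)) (volume.restrict S) :=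
    ((((hf.mono hSU).sup continuousOn_const).pow n).aemeasurable hSm).ennreal_ofReal
  have hYm : AEMeasurable (fun x => ENNReal.ofReal (b x ^ n)) (volume.restrict S) :=
    (((hb.mono hSU).pow n).aemeasurable hSm).ennreal_ofReal
  calc ∫⁻ x in S, ENNReal.ofReal (((hess n (fun x => u x - φ x) x).trace / n) ^ n)
      ≤ ∫⁻ x in S, ENNReal.ofReal Q * ((ENNReal.ofReal (max (f x) 0 ^ n) +
          ENNReal.ofReal ((t / r) ^ n) * ENNReal.ofReal (b x ^ n)) +
          (Metric.ball z r).indicator (fun _ => ENNReal.ofReal ((t / r ^ 2) ^ n)) x) := by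
        refine setLIntegral_mono_ae' hSm (Filter.Eventually.of_forall fun x hx => ?_)
        refine (ENNReal.ofReal_le_ofReal (hpt x hx)).trans_eq ?_
        have hbx := hb0 x (hSU hx)
        have hX0 : 0 ≤ max (f x) 0 := le_max_right _ _
        have hI0 : 0 ≤ (Metric.ball z r).indicator (fun _ => (t / r ^ 2) ^ n) x :=
          Set.indicator_nonneg (fun _ _ => by positivity) x
        rw [ENNReal.ofReal_mul hQ0.le, ENNReal.ofReal_add (by positivity) hI0,
          ENNReal.ofReal_add (by positivity) (by positivity),
          ENNReal.ofReal_mul (p := (t / r) ^ n) (by positivity)]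
        have hind : ENNReal.ofReal ((Metric.ball z r).indicator (fun _ => (t / r ^ 2) ^ n) x) =
            (Metric.ball z r).indicator (fun _ => ENNReal.ofReal ((t / r ^ 2) ^ n)) x := by
          by_cases h : x ∈ Metric.ball z r
          · simp only [Set.indicator_of_mem h]
          · simp only [Set.indicator_of_notMem h, ENNReal.ofReal_zero]
        rw [hind]
    _ = ENNReal.ofReal Q * ((∫⁻ x in S, ENNReal.ofReal (max (f x) 0 ^ n))
            + ENNReal.ofReal ((t / r) ^ n) * (∫⁻ x in S, ENNReal.ofReal (b x ^ n))
            + ENNReal.ofReal ((t / r ^ 2) ^ n) * volume (Metric.ball z r ∩ S)) := by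
        have hXY : AEMeasurable (fun x => ENNReal.ofReal (max (f x) 0 ^ n) +
          ENNReal.ofReal ((t / r) ^ n) * ENNReal.ofReal (b x ^ n)) (volume.restrict S) :=
          hXm.add (hYm.const_mul _)
        rw [lintegral_const_mul' _ _ ENNReal.ofReal_ne_top, lintegral_add_left' hXY, lintegral_add_left' hXm,
          lintegral_const_mul' _ _ ENNReal.ofReal_ne_top,
          lintegral_indicator_const Metric.isOpen_ball.measurableSet,
          Measure.restrict_apply Metric.isOpen_ball.measurableSet]
    _ ≤ _ := by
        gcongr
        rintro x ⟨hx1, hx2⟩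
        refine ⟨hx1, ?_⟩
        have := (hSP x hx2).1
        linarith [hφle x]

lemma wh_vol_ball {n : ℕ} (hn : 2 ≤ n) : ∃ ω : ℝ, 0 < ω ∧
    ∀ (x : EuclideanSpace ℝ (Fin n)) (r : ℝ), 0 ≤ r →
      volume (Metric.ball x r) = ENNReal.ofReal (r ^ n * ω) := by
  refine ⟨(volume (Metric.ball (0 : EuclideanSpace ℝ (Fin n)) 1)).toReal, ?_, ?_⟩
  · exact ENNReal.toReal_pos (Metric.measure_ball_pos _ _ one_pos).ne' measure_ball_lt_top.ne
  · intro x r hr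
    have : Nonempty (Fin n) := ⟨⟨0, by omega⟩⟩
    rw [Measure.addHaar_ball volume x hr, finrank_euclideanSpace_fin,
      ENNReal.ofReal_mul (by positivity), ENNReal.ofReal_toReal measure_ball_lt_top.ne]

lemma wh_key (n : ℕ) (hn : 2 ≤ n) (lam Lam : ℝ) (hlam : 0 < lam) (hLam : lam ≤ Lam) :
    ∃ M δ η : ℝ, 1 < M ∧ 0 < δ ∧ δ ≤ 1 ∧ 0 < η ∧
      ∀ (b f u : EuclideanSpace ℝ (Fin n) → ℝ) (t r : ℝ) (z x0 : EuclideanSpace ℝ (Fin n)),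
        0 < t → 0 < r → r ≤ 1 → Metric.closedBall z (4 * r) ⊆ Metric.ball 0 2 →
        ContinuousOn b (Metric.ball 0 2) →
        ContinuousOn f (Metric.ball 0 2) →
        (∀ x ∈ Metric.ball (0 : EuclideanSpace ℝ (Fin n)) 2, 0 ≤ b x) →
        ContDiffOn ℝ 2 u (Metric.ball 0 2) →
        (∀ x ∈ Metric.ball (0 : EuclideanSpace ℝ (Fin n)) 2, 0 ≤ u x) →
        (∀ x ∈ Metric.ball (0 : EuclideanSpace ℝ (Fin n)) 2,
          pucciMinus n lam Lam (hess n u x) - b x * gradNorm n u x ≤ f x) →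
        (∫⁻ x in Metric.closedBall z (4 * r), ENNReal.ofReal (max (f x) 0 ^ n))
          ≤ ENNReal.ofReal (η * t ^ n) →
        (∫⁻ x in Metric.closedBall z (4 * r), ENNReal.ofReal (b x ^ n)) ≤ ENNReal.ofReal η →
        x0 ∈ Metric.closedBall z (3 * r) → u x0 ≤ t →
        ENNReal.ofReal δ * volume (Metric.ball z r) ≤
          volume {x ∈ Metric.ball z r | u x ≤ M * t} := by
  obtain ⟨M, Q, hM, hQ, key⟩ := wh_key_aux n hn lam Lam hlam hLam
  obtain ⟨ω, hω, hvol⟩ := wh_vol_ball hn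
  set η : ℝ := (1 / 8) ^ n * ω / (4 * Q) with hη
  have hη0 : 0 < η := by positivity
  refine ⟨M, min 1 ((1 / 8) ^ n / (2 * Q)), η, hM, by positivity, min_le_left _ _, hη0, ?_⟩
  intro b f u t r z x0 ht hr hr1 hsub hb hf hb0 hu hu0 hineq hfn hbn hx0 hux0
  have h := key b f u t r z x0 ht hr hsub hb hf hb0 hu hu0 hineq hx0 hux0
  set VV := volume {x ∈ Metric.ball z r | u x ≤ M * t} with hVV
  have hVfin : VV ≠ ⊤ :=
    ((measure_mono fun x hx => hx.1).trans_lt (measure_ball_lt_top (x := z) (r := r))).ne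
  obtain ⟨V, hV0, hV⟩ : ∃ V : ℝ, 0 ≤ V ∧ VV = ENNReal.ofReal V :=
    ⟨VV.toReal, ENNReal.toReal_nonneg, (ENNReal.ofReal_toReal hVfin).symm⟩
  rw [hV] at h ⊢
  have h2 : ENNReal.ofReal ((t / (8 * r)) ^ n * ω) ≤
      ENNReal.ofReal (Q * (η * t ^ n + (t / r) ^ n * η + (t / r ^ 2) ^ n * V)) := by
    rw [← hvol 0 _ (by positivity)]
    refine h.trans ?_
    rw [ENNReal.ofReal_mul hQ.le, ENNReal.ofReal_add (by positivity) (by positivity),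
      ENNReal.ofReal_add (by positivity) (by positivity),
      ENNReal.ofReal_mul (p := (t / r) ^ n) (by positivity),
      ENNReal.ofReal_mul (p := (t / r ^ 2) ^ n) (by positivity)]
    gcongr
  have h3 := (ENNReal.ofReal_le_ofReal_iff (by positivity)).1 h2
  rw [hvol z r hr.le, ← ENNReal.ofReal_mul (by positivity)]
  apply ENNReal.ofReal_le_ofReal
  have e1 : (t / (8 * r)) ^ n = (t / r) ^ n * (1 / 8) ^ n := by
    rw [← mul_pow]; congr 1; field_simp
  have e2 : t ^ n ≤ (t / r) ^ n := by
    apply pow_le_pow_left₀ ht.le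
    rw [le_div_iff₀ hr]
    nlinarith
  have e3 : (t / r ^ 2) ^ n = (t / r) ^ n * (1 / r) ^ n := by
    rw [← mul_pow]; congr 1; field_simp
  have hP : 0 < (t / r) ^ n := by positivity
  have h4 : (t / r) ^ n * ((1 / 8) ^ n * ω) ≤
      (t / r) ^ n * (Q * (2 * η + (1 / r) ^ n * V)) := by
    rw [e1, e3] at h3
    have : Q * (η * t ^ n) ≤ Q * (η * (t / r) ^ n) := by gcongr
    nlinarith
  have h5 := le_of_mul_le_mul_left h4 hP
  have h6 : Q * η * 4 = (1 / 8) ^ n * ω := by rw [hη]; field_simp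
  have h7 : (1 / 8) ^ n * ω ≤ 2 * Q * ((1 / r) ^ n * V) := by nlinarith
  have h8 : (1 / r) ^ n * r ^ n = 1 := by rw [← mul_pow]; field_simp; simp
  calc min 1 ((1 / 8) ^ n / (2 * Q)) * (r ^ n * ω) ≤ ((1 / 8) ^ n / (2 * Q)) * (r ^ n * ω) := by
        gcongr; exact min_le_right _ _
    _ = r ^ n * (((1 / 8) ^ n * ω) / (2 * Q)) := by ring
    _ ≤ r ^ n * ((1 / r) ^ n * V) := by
        gcongr
        rw [div_le_iff₀ (by positivity)]
        linarith
    _ = ((1 / r) ^ n * r ^ n) * V := by ring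
    _ = V := by rw [h8, one_mul]

lemma wh_exists_good {n : ℕ} {F : Set (EuclideanSpace ℝ (Fin n))}
    (good : EuclideanSpace ℝ (Fin n) → ℝ → Prop) {r0 : ℝ} (hr0 : 0 < r0) (hr01 : r0 ≤ 1 / 2)
    (hF : IsOpen F) (hF1 : F ⊆ Metric.ball 0 1)
    (h1 : ∀ z ∈ Metric.ball (0 : EuclideanSpace ℝ (Fin n)) 1, ∀ r, 0 < r → r ≤ r0 →
      good z r ∨ Metric.closedBall z (3 * r) ∩ Metric.ball 0 1 ⊆ F)
    (h2 : ∀ z ∈ Metric.ball (0 : EuclideanSpace ℝ (Fin n)) 1, good z r0)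
    (x : EuclideanSpace ℝ (Fin n)) (hx : x ∈ F) :
    ∃ z r, 0 < r ∧ r ≤ r0 ∧ Metric.ball z r ⊆ F ∧ x ∈ Metric.ball z r ∧ good z r := by
  by_contra! hcon
  obtain ⟨ρ, hρ, hρF⟩ := Metric.isOpen_iff.1 hF x hx
  have hx1 : ‖x‖ < 1 := by simpa using hF1 hx
  obtain ⟨s, hs0, hsρ, hsr, hsx⟩ : ∃ s, 0 < s ∧ s ≤ ρ ∧ s ≤ r0 ∧ ‖x‖ + s ≤ 1 := by
    refine ⟨min ρ (min r0 (1 - ‖x‖)), ?_, min_le_left _ _, ?_, ?_⟩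
    · have : 0 < 1 - ‖x‖ := by linarith
      positivity
    · exact (min_le_right _ _).trans (min_le_left _ _)
    · have := (min_le_right ρ (min r0 (1 - ‖x‖))).trans (min_le_right _ _)
      linarith
  have key : ∀ k : ℕ, ∃ z r, min r0 ((3 / 2) ^ k * s) ≤ r ∧ 0 < r ∧ r ≤ r0 ∧ ‖z‖ + r ≤ 1 ∧
      Metric.ball z r ⊆ F ∧ x ∈ Metric.ball z r := by
    intro k
    induction k with
    | zero =>
      exact ⟨x, s, by simp, hs0, hsr, hsx, (Metric.ball_subset_ball hsρ).trans hρF,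
        Metric.mem_ball_self hs0⟩
    | succ k ih =>
      obtain ⟨z, r, hk, hr, hrr, hzr, hB, hxB⟩ := ih
      have hz1 : z ∈ Metric.ball (0 : EuclideanSpace ℝ (Fin n)) 1 := by simp; linarith
      have h3 : Metric.closedBall z (3 * r) ∩ Metric.ball 0 1 ⊆ F :=
        (h1 z hz1 r hr hrr).resolve_left (hcon z r hr hrr hB hxB)
      set r' := min r0 (3 / 2 * r) with hr'
      have hr'1 : r ≤ r' := le_min hrr (by linarith)
      have hr'2 : r' ≤ 3 / 2 * r := min_le_right _ _
      have hr'3 : r' ≤ r0 := min_le_left _ _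
      set σ := (r' - r) / (1 - r) with hσ
      have h1r : 0 < 1 - r := by linarith
      have hσ1 : σ * (1 - r) = r' - r := by rw [hσ]; field_simp
      have hσ0 : 0 ≤ σ := div_nonneg (by linarith) h1r.le
      have hσr : σ ≤ r := by
        rw [hσ, div_le_iff₀ h1r]; nlinarith
      have hnz : ‖(1 - σ) • z‖ = (1 - σ) * ‖z‖ := by
        rw [norm_smul, Real.norm_of_nonneg (by linarith)]
      have hdz : dist z ((1 - σ) • z) = σ * ‖z‖ := by
        rw [dist_eq_norm, sub_smul, one_smul, sub_sub_cancel, norm_smul, Real.norm_of_nonneg hσ0]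
      have hσz : σ * ‖z‖ ≤ r' - r := by
        rw [← hσ1]; gcongr; linarith
      refine ⟨(1 - σ) • z, r', ?_, by linarith, hr'3, ?_, ?_, ?_⟩
      · refine le_min (min_le_left _ _) ?_
        have : min r0 ((3 / 2) ^ k * s) * (3 / 2) ≤ r * (3 / 2) := by gcongr
        refine le_trans ?_ (this.trans_eq (mul_comm _ _))
        rw [min_mul_of_nonneg _ _ (by norm_num)]
        refine min_le_min (by linarith) ?_
        rw [pow_succ]; apply le_of_eq; ring
      · rw [hnz]
        nlinarith
      · intro y hy
        rw [Metric.mem_ball] at hy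
        apply h3
        constructor
        · rw [Metric.mem_closedBall]
          have := dist_triangle y ((1 - σ) • z) z
          rw [dist_comm ((1 - σ) • z) z, hdz] at this
          linarith
        · rw [mem_ball_zero_iff]
          have : ‖y‖ ≤ ‖y - (1 - σ) • z‖ + ‖(1 - σ) • z‖ := by
            simpa using norm_add_le (y - (1 - σ) • z) ((1 - σ) • z)
          rw [dist_eq_norm] at hy
          rw [hnz] at this
          nlinarith
      · rw [Metric.mem_ball] at hxB ⊢
        have := dist_triangle x z ((1 - σ) • z)
        rw [hdz] at this
        linarith
  obtain ⟨k, hk⟩ := pow_unbounded_of_one_lt (r0 / s) (by norm_num : (1:ℝ) < 3 / 2)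
  obtain ⟨z, r, hkr, hr, hrr, hzr, hB, hxB⟩ := key k
  have : r0 ≤ r := by
    refine le_trans (le_min le_rfl ?_) hkr
    rw [div_lt_iff₀ hs0] at hk
    exact hk.le
  have hre : r = r0 := le_antisymm hrr this
  subst hre
  exact hcon z r hr le_rfl hB hxB (h2 z (by simp; linarith))

lemma wh_ink {n : ℕ} (hn : 2 ≤ n) {F G : Set (EuclideanSpace ℝ (Fin n))}
    {r0 δ : ℝ} (hr0 : 0 < r0) (hr01 : r0 ≤ 1 / 2) (hδ : 0 < δ)
    (hF : IsOpen F) (hF1 : F ⊆ Metric.ball 0 1) (hG : MeasurableSet G)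
    (h1 : ∀ z ∈ Metric.ball (0 : EuclideanSpace ℝ (Fin n)) 1, ∀ r, 0 < r → r ≤ r0 →
      ENNReal.ofReal δ * volume (Metric.ball z r) ≤ volume (Metric.ball z r ∩ G) ∨
        Metric.closedBall z (3 * r) ∩ Metric.ball 0 1 ⊆ F)
    (h2 : ∀ z ∈ Metric.ball (0 : EuclideanSpace ℝ (Fin n)) 1,
      ENNReal.ofReal δ * volume (Metric.ball z r0) ≤ volume (Metric.ball z r0 ∩ G)) :
    ENNReal.ofReal (δ / 5 ^ n) * volume F ≤ volume (F ∩ G) := by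
  obtain ⟨ω, hω, hvol⟩ := wh_vol_ball hn
  choose! z r hr hrr hBF hxB hgood using
    wh_exists_good (fun z r => ENNReal.ofReal δ * volume (Metric.ball z r) ≤
      volume (Metric.ball z r ∩ G)) hr0 hr01 hF hF1 h1 h2
  obtain ⟨J, hJF, hJd, hJc⟩ := Vitali.exists_disjoint_subfamily_covering_enlargement_ball F z r r0
    hrr 5 (by norm_num)
  have hJcount : J.Countable := by
    refine hJd.countable_of_isOpen (fun a _ => Metric.isOpen_ball) fun a ha => ?_
    exact ⟨_, Metric.mem_ball_self (hr a (hJF ha))⟩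
  have hFsub : F ⊆ ⋃ a ∈ J, Metric.ball (z a) (5 * r a) := by
    intro x hx
    obtain ⟨a, ha, hsub⟩ := hJc x hx
    exact Set.mem_biUnion ha (hsub (hxB x hx))
  have h5 : ∀ a ∈ J, ENNReal.ofReal (δ / 5 ^ n) * volume (Metric.ball (z a) (5 * r a)) ≤
      volume (Metric.ball (z a) (r a) ∩ G) := by
    intro a ha
    have hra := hr a (hJF ha)
    refine le_trans (le_of_eq ?_) (hgood a (hJF ha))
    rw [hvol _ _ (by positivity), hvol _ _ hra.le, ← ENNReal.ofReal_mul (by positivity),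
      ← ENNReal.ofReal_mul (by positivity)]
    congr 1
    rw [mul_pow]; field_simp
  calc ENNReal.ofReal (δ / 5 ^ n) * volume F
      ≤ ENNReal.ofReal (δ / 5 ^ n) * ∑' a : J, volume (Metric.ball (z a) (5 * r a)) := by
        gcongr
        exact (measure_mono hFsub).trans (measure_biUnion_le _ hJcount _)
    _ = ∑' a : J, ENNReal.ofReal (δ / 5 ^ n) * volume (Metric.ball (z a) (5 * r a)) :=
        ENNReal.tsum_mul_left.symm
    _ ≤ ∑' a : J, volume (Metric.ball (z a) (r a) ∩ G) :=
        ENNReal.tsum_le_tsum fun a => h5 a a.2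
    _ = volume (⋃ a ∈ J, Metric.ball (z a) (r a) ∩ G) := by
        rw [measure_biUnion hJcount]
        · intro a ha b hb hab
          exact (hJd ha hb hab).mono Set.inter_subset_left Set.inter_subset_left
        · exact fun a _ => Metric.isOpen_ball.measurableSet.inter hG
    _ ≤ volume (F ∩ G) := by
        apply measure_mono
        refine Set.iUnion₂_subset fun a ha => ?_
        exact Set.inter_subset_inter_left _ (hBF a (hJF ha))

lemma wh_chain {n : ℕ} {u : EuclideanSpace ℝ (Fin n) → ℝ} {r0 δ M t0 : ℝ}
    (hr0 : 0 < r0) (hδ : 0 < δ) (hM : 1 < M) (ht0 : 0 < t0)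
    (hKP : ∀ z ∈ Metric.ball (0 : EuclideanSpace ℝ (Fin n)) 1, ∀ r, 0 < r → r ≤ r0 →
      ∀ t, t0 ≤ t → ∀ x0 ∈ Metric.closedBall z (3 * r), u x0 ≤ t →
      ENNReal.ofReal δ * volume (Metric.ball z r) ≤ volume {x ∈ Metric.ball z r | u x ≤ M * t})
    (x : EuclideanSpace ℝ (Fin n)) (hx : x ∈ Metric.ball (0 : EuclideanSpace ℝ (Fin n)) 1)
    (hux : u x ≤ t0) (k : ℕ) :
    ∀ z ∈ Metric.ball (0 : EuclideanSpace ℝ (Fin n)) 1, dist x z ≤ (k + 1) * r0 →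
      ENNReal.ofReal δ * volume (Metric.ball z r0) ≤
        volume {x ∈ Metric.ball z r0 | u x ≤ M ^ (k + 1) * t0} := by
  induction k with
  | zero =>
    intro z hz hd
    simp only [zero_add, pow_one]
    refine hKP z hz r0 hr0 le_rfl t0 le_rfl x ?_ hux
    rw [Metric.mem_closedBall]
    simp at hd
    linarith
  | succ k ih =>
    intro z hz hd
    push_cast at hd
    set s : ℝ := (k + 1) / (k + 2) with hs
    have hk : (0:ℝ) ≤ k := Nat.cast_nonneg k
    have hs0 : 0 ≤ s := by positivity
    have hs1 : 1 - s = 1 / (k + 2) := by rw [hs]; field_simp; ring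
    have hs2 : 0 ≤ 1 - s := by rw [hs1]; positivity
    set z' := AffineMap.lineMap x z s with hz'
    have hz'1 : z' ∈ Metric.ball (0 : EuclideanSpace ℝ (Fin n)) 1 :=
      (convex_ball _ _).lineMap_mem hx hz ⟨hs0, by linarith⟩
    have hd1 : dist x z' ≤ (k + 1) * r0 := by
      rw [hz', dist_left_lineMap, Real.norm_of_nonneg hs0]
      calc s * dist x z ≤ s * ((k + 1 + 1) * r0) := by gcongr
        _ = _ := by rw [hs]; field_simp; ring
    have hd2 : dist z' z ≤ r0 := by
      rw [hz', dist_lineMap_right, Real.norm_of_nonneg hs2]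
      calc (1 - s) * dist x z ≤ (1 - s) * ((k + 1 + 1) * r0) := by gcongr
        _ = _ := by rw [hs1]; field_simp; ring
    have h1 := ih z' hz'1 hd1
    have hpos : 0 < volume {x ∈ Metric.ball z' r0 | u x ≤ M ^ (k + 1) * t0} :=
      lt_of_lt_of_le (ENNReal.mul_pos (ENNReal.ofReal_pos.2 hδ).ne'
        (Metric.measure_ball_pos _ _ hr0).ne') h1
    obtain ⟨x', hx'1, hx'2⟩ := nonempty_of_measure_ne_zero hpos.ne'
    have h2 := hKP z hz r0 hr0 le_rfl (M ^ (k + 1) * t0)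
      (le_mul_of_one_le_left ht0.le (one_le_pow₀ hM.le)) x' (by
        rw [Metric.mem_closedBall]
        rw [Metric.mem_ball] at hx'1
        have := dist_triangle x' z' z
        linarith) hx'2
    rwa [← mul_assoc, ← pow_succ'] at h2

lemma wh_decay {n : ℕ} (hn : 2 ≤ n) {u : EuclideanSpace ℝ (Fin n) → ℝ} {r0 δ M t0 : ℝ}
    (hr0 : 0 < r0) (hr01 : r0 ≤ 1 / 5) (hδ : 0 < δ) (hδ1 : δ ≤ 1) (hM : 1 < M) (ht0 : 0 < t0)
    (hu : ContinuousOn u (Metric.ball 0 2))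
    (hKP : ∀ z ∈ Metric.ball (0 : EuclideanSpace ℝ (Fin n)) 1, ∀ r, 0 < r → r ≤ r0 →
      ∀ t, t0 ≤ t → ∀ x0 ∈ Metric.closedBall z (3 * r), u x0 ≤ t →
      ENNReal.ofReal δ * volume (Metric.ball z r) ≤ volume {x ∈ Metric.ball z r | u x ≤ M * t})
    (x : EuclideanSpace ℝ (Fin n)) (hx : x ∈ Metric.ball (0 : EuclideanSpace ℝ (Fin n)) 1)
    (hux : u x ≤ t0) (N : ℕ) (hN : 2 ≤ N * r0) (k : ℕ) :
    IsOpen {x ∈ Metric.ball (0 : EuclideanSpace ℝ (Fin n)) 1 | M ^ (N + k) * t0 < u x} ∧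
    volume {x ∈ Metric.ball (0 : EuclideanSpace ℝ (Fin n)) 1 | M ^ (N + k) * t0 < u x} ≤
      ENNReal.ofReal ((1 - δ / 5 ^ n) ^ k) *
        volume (Metric.ball (0 : EuclideanSpace ℝ (Fin n)) 1) := by
  have hb12 : Metric.ball (0 : EuclideanSpace ℝ (Fin n)) 1 ⊆ Metric.ball 0 2 :=
    Metric.ball_subset_ball (by norm_num)
  have hopen : ∀ a : ℝ,
      IsOpen {x ∈ Metric.ball (0 : EuclideanSpace ℝ (Fin n)) 1 | a < u x} := fun a =>
    (hu.mono hb12).isOpen_inter_preimage Metric.isOpen_ball isOpen_Ioi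
  have hopen2 : ∀ a : ℝ,
      IsOpen {x ∈ Metric.ball (0 : EuclideanSpace ℝ (Fin n)) 2 | a < u x} := fun a =>
    hu.isOpen_inter_preimage Metric.isOpen_ball isOpen_Ioi
  refine ⟨hopen _, ?_⟩
  have hc0 : 0 < δ / 5 ^ n := by positivity
  have hc1 : δ / 5 ^ n < 1 := by
    rw [div_lt_one (by positivity)]
    exact hδ1.trans_lt (one_lt_pow₀ (by norm_num) (by omega))
  have hballs : ∀ z ∈ Metric.ball (0 : EuclideanSpace ℝ (Fin n)) 1, ∀ r, r ≤ r0 →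
      Metric.ball z r ⊆ Metric.ball 0 2 := by
    intro z hz r hr y hy
    rw [Metric.mem_ball] at *
    have := dist_triangle y z 0
    linarith
  induction k with
  | zero =>
    simp only [pow_zero, ENNReal.ofReal_one, one_mul]
    exact measure_mono (Set.sep_subset _ _)
  | succ k ih =>
    set F := {x ∈ Metric.ball (0 : EuclideanSpace ℝ (Fin n)) 1 | M ^ (N + k) * t0 < u x} with hFd
    set G := {x ∈ Metric.ball (0 : EuclideanSpace ℝ (Fin n)) 2 | u x ≤ M ^ (N + k + 1) * t0}
      with hGd
    have hG : MeasurableSet G := by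
      have : G = Metric.ball (0 : EuclideanSpace ℝ (Fin n)) 2 \
          {x ∈ Metric.ball (0 : EuclideanSpace ℝ (Fin n)) 2 | M ^ (N + k + 1) * t0 < u x} := by
        ext y
        simp only [hGd, Set.mem_sdiff, Set.mem_ofPred_eq, not_and, not_lt]
        tauto
      rw [this]
      exact Metric.isOpen_ball.measurableSet.diff (hopen2 _).measurableSet
    have hN1 : 1 ≤ N := by
      rcases Nat.eq_zero_or_pos N with h | h
      · subst h; norm_num at hN
      · exact h
    have hink := wh_ink hn (F := F) (G := G) hr0 (by linarith) hδ (hopen _)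
      (Set.sep_subset _ _) hG (by
        intro z hz r hr hrr
        by_cases hc : Metric.closedBall z (3 * r) ∩ Metric.ball 0 1 ⊆ F
        · exact Or.inr hc
        · left
          rw [Set.not_subset] at hc
          obtain ⟨y, ⟨hy1, hy2⟩, hyF⟩ := hc
          have hyu : u y ≤ M ^ (N + k) * t0 := by
            by_contra h
            exact hyF ⟨hy2, not_le.mp h⟩
          refine (hKP z hz r hr hrr (M ^ (N + k) * t0)
            (le_mul_of_one_le_left ht0.le (one_le_pow₀ hM.le)) y hy1 hyu).trans
            (measure_mono ?_)
          rintro w ⟨hw1, hw2⟩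
          refine ⟨hw1, hballs z hz r hrr hw1, ?_⟩
          rw [pow_succ]; linarith) (by
        intro z hz
        have := wh_chain hr0 hδ hM ht0 hKP x hx hux (N - 1) z hz (by
          have h1 : ((N - 1 : ℕ) : ℝ) + 1 = N := by
            rw [Nat.cast_sub hN1]; simp
          rw [h1]
          rw [Metric.mem_ball] at hx hz
          have := dist_triangle_right x z 0
          linarith)
        rw [Nat.sub_add_cancel hN1] at this
        refine this.trans (measure_mono ?_)
        rintro w ⟨hw1, hw2⟩
        refine ⟨hw1, hballs z hz r0 le_rfl hw1, hw2.trans ?_⟩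
        have : M ^ N ≤ M ^ (N + k + 1) := pow_le_pow_right₀ hM.le (by omega)
        exact mul_le_mul_of_nonneg_right this ht0.le)
    have hsub : {x ∈ Metric.ball (0 : EuclideanSpace ℝ (Fin n)) 1 |
        M ^ (N + (k + 1)) * t0 < u x} ⊆ F \ G := by
      rintro w ⟨hw1, hw2⟩
      refine ⟨⟨hw1, lt_of_le_of_lt ?_ hw2⟩, fun h => absurd h.2 (not_le.mpr hw2)⟩
      exact mul_le_mul_of_nonneg_right (pow_le_pow_right₀ hM.le (by omega)) ht0.le
    have hFfin : volume F ≠ ∞ :=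
      ne_top_of_le_ne_top measure_ball_lt_top.ne (measure_mono (Set.sep_subset _ _))
    have h3 : volume (F \ G) ≤ ENNReal.ofReal (1 - δ / 5 ^ n) * volume F := by
      have h4 := measure_sdiff_add_inter (μ := volume) F hG
      have h5 : ENNReal.ofReal (1 - δ / 5 ^ n) * volume F +
          ENNReal.ofReal (δ / 5 ^ n) * volume F = volume F := by
        rw [← add_mul, ← ENNReal.ofReal_add (by linarith) hc0.le]
        simp
      have h6 : volume (F \ G) + ENNReal.ofReal (δ / 5 ^ n) * volume F ≤
          ENNReal.ofReal (1 - δ / 5 ^ n) * volume F +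
          ENNReal.ofReal (δ / 5 ^ n) * volume F := by
        rw [h5]
        calc _ ≤ volume (F \ G) + volume (F ∩ G) := by gcongr
          _ = _ := h4
      exact (ENNReal.add_le_add_iff_right (ENNReal.mul_ne_top ENNReal.ofReal_ne_top hFfin)).mp h6
    calc _ ≤ volume (F \ G) := measure_mono hsub
      _ ≤ _ := h3
      _ ≤ ENNReal.ofReal (1 - δ / 5 ^ n) * (ENNReal.ofReal ((1 - δ / 5 ^ n) ^ k) *
        volume (Metric.ball (0 : EuclideanSpace ℝ (Fin n)) 1)) := by gcongr
      _ = _ := by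
        rw [← mul_assoc, ← ENNReal.ofReal_mul (by linarith), pow_succ']

lemma wh_integrate {n : ℕ} (hn : 2 ≤ n) {r0 δ M : ℝ}
    (hr0 : 0 < r0) (hr01 : r0 ≤ 1 / 5) (hδ : 0 < δ) (hδ1 : δ ≤ 1) (hM : 1 < M) :
    ∃ ε C1 : ℝ, 0 < ε ∧ 0 < C1 ∧ ∀ (u : EuclideanSpace ℝ (Fin n) → ℝ) (t0 : ℝ), 0 < t0 →
    ContinuousOn u (Metric.ball 0 2) →
    (∀ x ∈ Metric.ball (0 : EuclideanSpace ℝ (Fin n)) 2, 0 ≤ u x) →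
    (∀ z ∈ Metric.ball (0 : EuclideanSpace ℝ (Fin n)) 1, ∀ r, 0 < r → r ≤ r0 →
      ∀ t, t0 ≤ t → ∀ x0 ∈ Metric.closedBall z (3 * r), u x0 ≤ t →
      ENNReal.ofReal δ * volume (Metric.ball z r) ≤
        volume {x ∈ Metric.ball z r | u x ≤ M * t}) →
    (∃ x ∈ Metric.ball (0 : EuclideanSpace ℝ (Fin n)) 1, u x ≤ t0) →
    (∫⁻ x in Metric.ball (0 : EuclideanSpace ℝ (Fin n)) 1, ENNReal.ofReal (u x ^ ε)) ≤
      ENNReal.ofReal (C1 * t0 ^ ε) := by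
  obtain ⟨ω, hω, hvol⟩ := wh_vol_ball hn
  obtain ⟨N, hN⟩ := exists_nat_ge (2 / r0)
  rw [div_le_iff₀ hr0] at hN
  set c := δ / 5 ^ n with hc
  have hc0 : 0 < c := by positivity
  have hc1 : c < 1 := by
    rw [hc, div_lt_one (by positivity)]
    exact hδ1.trans_lt (one_lt_pow₀ (by norm_num) (by omega))
  set ε := Real.logb M (1 + c) with hε
  have hε0 : 0 < ε := Real.logb_pos hM (by linarith)
  have hQ : M ^ ε = 1 + c := Real.rpow_logb (by linarith) (by linarith) (by linarith)
  have hM0 : 0 < M := by linarith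
  refine ⟨ε, (M ^ (N + 1)) ^ ε * (ω + (1 + c) * (ω * (c ^ 2)⁻¹)), hε0, by positivity, ?_⟩
  intro u t0 ht0 hu hu0 hKP ⟨x, hx, hux⟩
  have hdec := wh_decay hn hr0 hr01 hδ hδ1 hM ht0 hu hKP x hx hux N hN
  set E : ℕ → Set (EuclideanSpace ℝ (Fin n)) := fun k =>
    {x ∈ Metric.ball (0 : EuclideanSpace ℝ (Fin n)) 1 | M ^ (N + k) * t0 < u x} with hE
  set P : ℝ := (M ^ (N + 1) * t0) ^ ε with hP
  have hP0 : 0 ≤ P := by positivity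
  have hpt : ∀ y ∈ Metric.ball (0 : EuclideanSpace ℝ (Fin n)) 1,
      ENNReal.ofReal (u y ^ ε) ≤ ENNReal.ofReal P * (1 + ∑' k : ℕ,
        ENNReal.ofReal ((1 + c) ^ (k + 1)) * (E k).indicator 1 y) := by
    intro y hy
    have huy : 0 ≤ u y := hu0 y (Metric.ball_subset_ball (by norm_num) hy)
    by_cases hc : u y ≤ M ^ (N + 1) * t0
    · calc ENNReal.ofReal (u y ^ ε) ≤ ENNReal.ofReal P :=
            ENNReal.ofReal_le_ofReal (Real.rpow_le_rpow huy hc hε0.le)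
        _ = ENNReal.ofReal P * 1 := (mul_one _).symm
        _ ≤ _ := by gcongr; exact le_self_add
    · push Not at hc
      have hpos : 0 < M ^ (N + 1) * t0 := by positivity
      obtain ⟨k, hk1, hk2⟩ := exists_nat_pow_near (x := u y / (M ^ (N + 1) * t0))
        (by rw [one_le_div hpos]; exact hc.le) hM
      rw [le_div_iff₀ hpos] at hk1
      rw [div_lt_iff₀ hpos] at hk2
      have hmem : y ∈ E k := by
        refine ⟨hy, lt_of_lt_of_le ?_ hk1⟩
        rw [← mul_assoc, ← pow_add]
        exact mul_lt_mul_of_pos_right (pow_lt_pow_right₀ hM (by omega)) ht0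
      have h1 : u y ^ ε ≤ P * (1 + c) ^ (k + 1) := by
        calc u y ^ ε ≤ (M ^ (k + 1) * (M ^ (N + 1) * t0)) ^ ε :=
              Real.rpow_le_rpow huy hk2.le hε0.le
          _ = (M ^ (k + 1)) ^ ε * P := Real.mul_rpow (by positivity) (by positivity)
          _ = P * (1 + c) ^ (k + 1) := by
            rw [← hQ, ← Real.rpow_natCast, ← Real.rpow_natCast, ← Real.rpow_mul hM0.le,
              ← Real.rpow_mul hM0.le, mul_comm ε, mul_comm]
      calc ENNReal.ofReal (u y ^ ε) ≤ ENNReal.ofReal (P * (1 + c) ^ (k + 1)) :=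
            ENNReal.ofReal_le_ofReal h1
        _ = ENNReal.ofReal P * (ENNReal.ofReal ((1 + c) ^ (k + 1)) * (E k).indicator 1 y) := by
            rw [ENNReal.ofReal_mul hP0, Set.indicator_of_mem hmem, Pi.one_apply, mul_one]
        _ ≤ _ := by
            gcongr
            exact (ENNReal.le_tsum (f := fun k : ℕ => ENNReal.ofReal ((1 + c) ^ (k + 1)) *
              (E k).indicator 1 y) k).trans le_add_self
  have hmE : ∀ k, MeasurableSet (E k) := fun k => (hdec k).1.measurableSet
  have hvB : volume (Metric.ball (0 : EuclideanSpace ℝ (Fin n)) 1) = ENNReal.ofReal ω := by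
    rw [hvol 0 1 zero_le_one]; simp
  have hmi : ∀ k, Measurable (fun y => ENNReal.ofReal ((1 + c) ^ (k + 1)) *
      (E k).indicator (1 : EuclideanSpace ℝ (Fin n) → ℝ≥0∞) y) := fun k =>
    (measurable_one.indicator (hmE k)).const_mul _
  have hterm : ∀ k, (∫⁻ y in Metric.ball (0 : EuclideanSpace ℝ (Fin n)) 1,
      ENNReal.ofReal ((1 + c) ^ (k + 1)) *
      (E k).indicator (1 : EuclideanSpace ℝ (Fin n) → ℝ≥0∞) y) ≤
      ENNReal.ofReal ((1 + c) * ω * (1 - c ^ 2) ^ k) := by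
    intro k
    rw [lintegral_const_mul _ (measurable_one.indicator (hmE k)), lintegral_indicator_one (hmE k)]
    calc _ ≤ ENNReal.ofReal ((1 + c) ^ (k + 1)) *
          (ENNReal.ofReal ((1 - c) ^ k) * ENNReal.ofReal ω) := by
            gcongr
            refine (Measure.restrict_apply_le _ _).trans ?_
            rw [← hvB]
            exact (hdec k).2
      _ = _ := by
            rw [← ENNReal.ofReal_mul (pow_nonneg (by linarith) _),
              ← ENNReal.ofReal_mul (by positivity)]
            congr 1
            rw [show (1 : ℝ) - c ^ 2 = (1 + c) * (1 - c) by ring, mul_pow, pow_succ]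
            ring
  have hc2 : 0 ≤ 1 - c ^ 2 := by nlinarith
  have hgeo : HasSum (fun k : ℕ => (1 + c) * ω * (1 - c ^ 2) ^ k)
      ((1 + c) * ω * (c ^ 2)⁻¹) := by
    have := (hasSum_geometric_of_lt_one hc2 (by nlinarith)).mul_left ((1 + c) * ω)
    simpa using this
  calc _ ≤ ∫⁻ y in Metric.ball (0 : EuclideanSpace ℝ (Fin n)) 1,
        ENNReal.ofReal P * (1 + ∑' k : ℕ,
        ENNReal.ofReal ((1 + c) ^ (k + 1)) * (E k).indicator 1 y) :=
        setLIntegral_mono' measurableSet_ball hpt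
    _ = ENNReal.ofReal P * (ENNReal.ofReal ω + ∑' k : ℕ,
        ∫⁻ y in Metric.ball (0 : EuclideanSpace ℝ (Fin n)) 1,
        ENNReal.ofReal ((1 + c) ^ (k + 1)) *
        (E k).indicator (1 : EuclideanSpace ℝ (Fin n) → ℝ≥0∞) y) := by
      rw [lintegral_const_mul' _ _ ENNReal.ofReal_ne_top,
        lintegral_add_left measurable_const, lintegral_tsum (fun k => (hmi k).aemeasurable)]
      simp [hvB]
    _ ≤ ENNReal.ofReal P * (ENNReal.ofReal ω + ∑' k : ℕ,
        ENNReal.ofReal ((1 + c) * ω * (1 - c ^ 2) ^ k)) := by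
      gcongr with k
      exact hterm k
    _ = _ := by
      rw [← ENNReal.ofReal_tsum_of_nonneg (fun k => by positivity) hgeo.summable, hgeo.tsum_eq,
        ← ENNReal.ofReal_add hω.le (by positivity), ← ENNReal.ofReal_mul hP0]
      congr 1
      rw [hP, Real.mul_rpow (by positivity) ht0.le]
      ring

lemma wh_pow_split (n : ℕ) {s τ g : ℝ} (hs : (n : ℝ) ≤ s) (hτ : 0 < τ) (hg : 0 ≤ g) :
    g ^ n ≤ τ ^ n + τ ^ ((n : ℝ) - s) * |g| ^ s := by
  rw [abs_of_nonneg hg]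
  rcases le_or_gt g τ with h | h
  · have h1 : g ^ n ≤ τ ^ n := pow_le_pow_left₀ hg h n
    have h2 : 0 ≤ τ ^ ((n : ℝ) - s) * g ^ s := by positivity
    linarith
  · have hg0 : 0 < g := hτ.trans h
    have h1 : g ^ n = g ^ ((n : ℝ) - s) * g ^ s := by
      rw [← Real.rpow_add hg0, sub_add_cancel, Real.rpow_natCast]
    have h2 : g ^ ((n : ℝ) - s) ≤ τ ^ ((n : ℝ) - s) :=
      Real.rpow_le_rpow_of_nonpos hτ h.le (by linarith)
    have h3 : g ^ ((n : ℝ) - s) * g ^ s ≤ τ ^ ((n : ℝ) - s) * g ^ s :=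
      mul_le_mul_of_nonneg_right h2 (by positivity)
    have h4 : 0 < τ ^ n := by positivity
    linarith

lemma wh_lint_split (n : ℕ) {s τ V R : ℝ} (hs : (n : ℝ) ≤ s) (hτ : 0 < τ) (hV : 0 ≤ V)
    (hR : 0 ≤ R)
    {g : EuclideanSpace ℝ (Fin n) → ℝ} {S T : Set (EuclideanSpace ℝ (Fin n))}
    (hS : MeasurableSet S) (hST : S ⊆ T) (hg : ∀ x ∈ T, 0 ≤ g x)
    (hSV : volume S ≤ ENNReal.ofReal V)
    (hI : (∫⁻ x in T, ENNReal.ofReal (|g x| ^ s)) ≤ ENNReal.ofReal R) :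
    (∫⁻ x in S, ENNReal.ofReal (g x ^ n)) ≤
      ENNReal.ofReal (τ ^ n * V + τ ^ ((n : ℝ) - s) * R) := by
  calc (∫⁻ x in S, ENNReal.ofReal (g x ^ n))
      ≤ ∫⁻ x in S, (ENNReal.ofReal (τ ^ n) +
          ENNReal.ofReal (τ ^ ((n : ℝ) - s)) * ENNReal.ofReal (|g x| ^ s)) := by
        refine setLIntegral_mono' hS fun x hx => ?_
        rw [← ENNReal.ofReal_mul (by positivity),
          ← ENNReal.ofReal_add (by positivity) (by positivity)]
        exact ENNReal.ofReal_le_ofReal (wh_pow_split n hs hτ (hg x (hST hx)))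
    _ = ENNReal.ofReal (τ ^ n) * volume S + ENNReal.ofReal (τ ^ ((n : ℝ) - s)) *
          ∫⁻ x in S, ENNReal.ofReal (|g x| ^ s) := by
        rw [lintegral_add_left measurable_const, lintegral_const_mul' _ _ ENNReal.ofReal_ne_top]
        simp
    _ ≤ ENNReal.ofReal (τ ^ n) * ENNReal.ofReal V + ENNReal.ofReal (τ ^ ((n : ℝ) - s)) *
          ENNReal.ofReal R := by
        gcongr
        exact (lintegral_mono_set hST).trans hI
    _ = _ := by
        rw [← ENNReal.ofReal_mul (by positivity), ← ENNReal.ofReal_mul (by positivity),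
          ← ENNReal.ofReal_add (by positivity) (by positivity)]

/-- Interior weak Harnack inequality. -/
theorem interior_weak_harnack_inequality
    (n : ℕ) (hn : 2 ≤ n) (lam Lam : ℝ) (hlam : 0 < lam) (hLam : lam ≤ Lam)
    (p q K : ℝ) (hq : (n : ℝ) < q) (hp : (n : ℝ) ≤ p) (hpq : p ≤ q) (hK : 0 < K) :
    ∃ ε c C : ℝ, 0 < ε ∧ 0 < c ∧ 0 < C ∧
      ∀ b f u : EuclideanSpace ℝ (Fin n) → ℝ,
        ContinuousOn b (Metric.ball 0 2) →
        ContinuousOn f (Metric.ball 0 2) →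
        (∀ x ∈ Metric.ball (0 : EuclideanSpace ℝ (Fin n)) 2, 0 ≤ b x) →
        LpNormE n q b (Metric.ball 0 2) ≤ ENNReal.ofReal K →
        ContDiffOn ℝ 2 u (Metric.ball 0 2) →
        (∀ x ∈ Metric.ball (0 : EuclideanSpace ℝ (Fin n)) 2, 0 ≤ u x) →
        (∀ x ∈ Metric.ball (0 : EuclideanSpace ℝ (Fin n)) 2,
          pucciMinus n lam Lam (hess n u x) - b x * gradNorm n u x ≤ f x) →
        ENNReal.ofReal c *
            (∫⁻ x in Metric.ball (0 : EuclideanSpace ℝ (Fin n)) 1,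
              ENNReal.ofReal (u x ^ ε)) ^ (1 / ε)
          ≤ ENNReal.ofReal (⨅ x : Metric.ball (0 : EuclideanSpace ℝ (Fin n)) 1, u x.1)
            + ENNReal.ofReal C * LpNormE n p (fun x => max (f x) 0) (Metric.ball 0 2) := by
  have hn0 : (0 : ℝ) < n := by
    have : 0 < n := by omega
    exact_mod_cast this
  have hp0 : 0 < p := hn0.trans_le hp
  have hq0 : 0 < q := hn0.trans hq
  obtain ⟨ω, hω, hvol⟩ := wh_vol_ball hn
  obtain ⟨M, δ, η, hM, hδ, hδ1, hη, hkey⟩ := wh_key n hn lam Lam hlam hLam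
  obtain ⟨τ, hτ, hτK⟩ : ∃ τ : ℝ, 0 < τ ∧ τ ^ ((n : ℝ) - q) * K ^ q = η / 2 := by
    have hKq : 0 < K ^ q := Real.rpow_pos_of_pos hK q
    refine ⟨(η / 2 / K ^ q) ^ (1 / ((n : ℝ) - q)), by positivity, ?_⟩
    rw [← Real.rpow_mul (by positivity), one_div_mul_cancel (by linarith), Real.rpow_one,
      div_mul_cancel₀ _ hKq.ne']
  obtain ⟨r0, hr0, hr05, hr0τ⟩ : ∃ r0 : ℝ, 0 < r0 ∧ r0 ≤ 1 / 5 ∧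
      τ ^ n * ((5 * r0) ^ n * ω) ≤ η / 2 := by
    refine ⟨min (1 / 5) (η / (10 * (τ ^ n * ω))), by positivity, min_le_left _ _, ?_⟩
    set r := min (1 / 5) (η / (10 * (τ ^ n * ω))) with hr
    have hr0 : 0 < r := by positivity
    have h1 : r ≤ 1 / 5 := min_le_left _ _
    have h2 : r ≤ η / (10 * (τ ^ n * ω)) := min_le_right _ _
    rw [le_div_iff₀ (by positivity)] at h2
    have h3 : (5 * r) ^ n ≤ 5 * r :=
      pow_le_of_le_one (by positivity) (by linarith) (by omega)
    have h4 : (τ ^ n * ω) * (5 * r) ^ n ≤ (τ ^ n * ω) * (5 * r) :=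
      mul_le_mul_of_nonneg_left h3 (by positivity)
    linarith
  obtain ⟨σ, hσ, hση⟩ : ∃ σ : ℝ, 0 < σ ∧ σ ^ n * (2 ^ n * ω) ≤ η / 2 := by
    refine ⟨min 1 (η / (2 * (2 ^ n * ω))), by positivity, ?_⟩
    set r := min 1 (η / (2 * (2 ^ n * ω))) with hr
    have hr0 : 0 < r := by positivity
    have h1 : r ≤ 1 := min_le_left _ _
    have h2 : r ≤ η / (2 * (2 ^ n * ω)) := min_le_right _ _
    rw [le_div_iff₀ (by positivity)] at h2
    have h3 : r ^ n ≤ r := pow_le_of_le_one (by positivity) h1 (by omega)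
    have h4 : r ^ n * (2 ^ n * ω) ≤ r * (2 ^ n * ω) :=
      mul_le_mul_of_nonneg_right h3 (by positivity)
    linarith
  obtain ⟨C, hC, hCp⟩ : ∃ C : ℝ, 0 < C ∧ σ ^ ((n : ℝ) - p) / C ^ p = η / 2 := by
    refine ⟨(σ ^ ((n : ℝ) - p) / (η / 2)) ^ (1 / p), by positivity, ?_⟩
    rw [← Real.rpow_mul (by positivity), one_div_mul_cancel hp0.ne', Real.rpow_one]
    have : 0 < σ ^ ((n : ℝ) - p) := by positivity
    field_simp
  obtain ⟨ε, C1, hε, hC1, hIntg⟩ := wh_integrate hn hr0 hr05 hδ hδ1 hM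
  refine ⟨ε, (C1 ^ (1 / ε))⁻¹, C, hε, by positivity, hC, ?_⟩
  intro b f u hb hf hb0 hbK hu hu0 hpde
  have hball : ∀ z ∈ Metric.ball (0 : EuclideanSpace ℝ (Fin n)) 1, ∀ r, r ≤ r0 →
      Metric.closedBall z (4 * r) ⊆ Metric.ball 0 2 := by
    intro z hz r hr y hy
    rw [Metric.mem_ball] at *
    rw [Metric.mem_closedBall] at hy
    have := dist_triangle y z 0
    linarith
  have hbI : (∫⁻ x in Metric.ball (0 : EuclideanSpace ℝ (Fin n)) 2,
      ENNReal.ofReal (|b x| ^ q)) ≤ ENNReal.ofReal (K ^ q) := by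
    unfold LpNormE at hbK
    rw [one_div, ENNReal.rpow_inv_le_iff hq0, ENNReal.ofReal_rpow_of_nonneg hK.le hq0.le] at hbK
    exact hbK
  have hbn : ∀ z ∈ Metric.ball (0 : EuclideanSpace ℝ (Fin n)) 1, ∀ r, 0 < r → r ≤ r0 →
      (∫⁻ x in Metric.closedBall z (4 * r), ENNReal.ofReal (b x ^ n)) ≤ ENNReal.ofReal η := by
    intro z hz r hr hrr
    refine (wh_lint_split n hq.le hτ (V := (5 * r0) ^ n * ω) (by positivity)
      (Real.rpow_nonneg hK.le q) Metric.isClosed_closedBall.measurableSet (hball z hz r hrr)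
      hb0 ?_ hbI).trans (ENNReal.ofReal_le_ofReal (by linarith))
    rw [← hvol z (5 * r0) (by positivity)]
    exact measure_mono (Metric.closedBall_subset_ball (by linarith))
  set L := LpNormE n p (fun x => max (f x) 0) (Metric.ball 0 2) with hL
  set I := ⨅ x : Metric.ball (0 : EuclideanSpace ℝ (Fin n)) 1, u x.1 with hI
  refine ENNReal.le_of_forall_pos_le_add fun e he hfin => ?_
  set t0 : ℝ := (ENNReal.ofReal I + ENNReal.ofReal C * L).toReal + e with ht0d
  have ht0 : 0 < t0 := by
    have : (0 : ℝ) < e := he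
    positivity
  have ht0e : ENNReal.ofReal t0 = ENNReal.ofReal I + ENNReal.ofReal C * L + e := by
    rw [ht0d, ENNReal.ofReal_add ENNReal.toReal_nonneg e.coe_nonneg, ENNReal.ofReal_toReal hfin.ne,
      ENNReal.ofReal_coe_nnreal]
  have hIt : I < t0 := by
    have h1 : I ≤ (ENNReal.ofReal I + ENNReal.ofReal C * L).toReal :=
      (ENNReal.ofReal_le_iff_le_toReal hfin.ne).mp le_self_add
    have : (0 : ℝ) < e := he
    linarith
  have hLt : L ≤ ENNReal.ofReal (t0 / C) := by
    rw [ENNReal.ofReal_div_of_pos hC, ENNReal.le_div_iff_mul_le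
      (Or.inl (by simpa using hC)) (Or.inl ENNReal.ofReal_ne_top), ht0e, mul_comm]
    exact le_add_self.trans le_self_add
  have hfI : (∫⁻ x in Metric.ball (0 : EuclideanSpace ℝ (Fin n)) 2,
      ENNReal.ofReal (|max (f x) 0| ^ p)) ≤ ENNReal.ofReal ((t0 / C) ^ p) := by
    rw [hL] at hLt
    unfold LpNormE at hLt
    rw [one_div, ENNReal.rpow_inv_le_iff hp0, ENNReal.ofReal_rpow_of_nonneg (by positivity) hp0.le]
      at hLt
    exact hLt
  have hfn : (∫⁻ x in Metric.ball (0 : EuclideanSpace ℝ (Fin n)) 2,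
      ENNReal.ofReal (max (f x) 0 ^ n)) ≤ ENNReal.ofReal (η * t0 ^ n) := by
    refine (wh_lint_split n hp (τ := σ * t0) (by positivity) (V := 2 ^ n * ω) (by positivity)
      (by positivity) measurableSet_ball subset_rfl (fun x _ => le_max_right _ _)
      (by rw [hvol 0 2 (by norm_num)]) hfI).trans (ENNReal.ofReal_le_ofReal ?_)
    have h1 : (σ * t0) ^ ((n : ℝ) - p) * (t0 / C) ^ p = η / 2 * t0 ^ n := by
      rw [← hCp, Real.mul_rpow hσ.le ht0.le, Real.div_rpow ht0.le hC.le]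
      have h2 : t0 ^ n = t0 ^ ((n : ℝ) - p) * t0 ^ p := by
        rw [← Real.rpow_add ht0, sub_add_cancel, Real.rpow_natCast]
      rw [h2]; ring
    have h3 : (σ * t0) ^ n * (2 ^ n * ω) ≤ η / 2 * t0 ^ n := by
      rw [mul_pow]
      have := mul_le_mul_of_nonneg_right hση (pow_nonneg ht0.le n)
      linarith
    linarith
  obtain ⟨x0, hx0⟩ : ∃ x0 : Metric.ball (0 : EuclideanSpace ℝ (Fin n)) 1, u x0.1 < t0 := by
    have : Nonempty (Metric.ball (0 : EuclideanSpace ℝ (Fin n)) 1) := ⟨⟨0, by simp⟩⟩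
    exact exists_lt_of_ciInf_lt hIt
  have hJ := hIntg u t0 ht0 hu.continuousOn hu0 (by
    intro z hz r hr hrr t ht y hy huy
    have htp : 0 < t := ht0.trans_le ht
    refine hkey b f u t r z y htp hr (by linarith) (hball z hz r hrr) hb hf hb0 hu hu0 hpde
      ?_ (hbn z hz r hr hrr) hy huy
    refine (lintegral_mono_set (hball z hz r hrr)).trans (hfn.trans
      (ENNReal.ofReal_le_ofReal ?_))
    exact mul_le_mul_of_nonneg_left (pow_le_pow_left₀ ht0.le ht n) hη.le)
    ⟨x0.1, x0.2, hx0.le⟩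
  rw [← ht0e]
  calc _ ≤ ENNReal.ofReal (C1 ^ (1 / ε))⁻¹ * (ENNReal.ofReal (C1 * t0 ^ ε)) ^ (1 / ε) := by
        gcongr
    _ = ENNReal.ofReal t0 := by
        rw [ENNReal.ofReal_rpow_of_nonneg (by positivity) (by positivity),
          ← ENNReal.ofReal_mul (by positivity), Real.mul_rpow hC1.le (by positivity),
          ← Real.rpow_mul ht0.le, mul_one_div_cancel hε.ne', Real.rpow_one]
        congr 1
        have : 0 < C1 ^ (1 / ε) := by positivity
        field_simp
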